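/- (Palais–Smale compactness for large λ.) Assume N ≥ 2, 0 < α < N, p > (N+α)/N, and that the potential a satisfies (A₁) and (A₂). For every c* > 0 there exists λ* > 0 such that for all λ ≥ λ* and all c ≤ c*, every (PS)_c sequence {u_n} ⊂ E_λ for J_λ has a subsequence that converges in the E_λ-norm to some u ∈ E_λ. -/

import Mathlib

open scoped BigOperators ENNReal
open Filter

noncomputable section

namespace Choquard

variable {G : Type*}

/-- The word metric on a group with generating set `S`. -/
def wordDist [Group G] (S : Finset G) (x y : G) : ℕ :=
  sInf {k : ℕ | ∃ l : List G, (∀ g ∈ l, g ∈ S) ∧ l.length = k ∧ x⁻¹ * y = l.prod}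

/-- The closed ball of radius `r` about `c` in the word metric. -/
def ball [Group G] (S : Finset G) (c : G) (r : ℝ) : Set G :=
  {x | (wordDist S x c : ℝ) ≤ r}

/-- Polynomial growth of homogeneous dimension `N`. -/
def PolyGrowth [Group G] (S : Finset G) (N : ℕ) : Prop :=
  ∃ C₁ C₂ : ℝ, 0 < C₁ ∧ 0 < C₂ ∧ ∀ r : ℝ, 1 ≤ r →
    C₁ * r ^ N ≤ ((ball S (1 : G) r).ncard : ℝ) ∧
    ((ball S (1 : G) r).ncard : ℝ) ≤ C₂ * r ^ N

/-- Riesz-type asymptotics for the kernel `R`. -/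
def RieszKernel [Group G] (S : Finset G) (N : ℕ) (α : ℝ) (R : G → G → ℝ) : Prop :=
  (∀ x y, 0 < R x y) ∧
  ∃ c₁ c₂ : ℝ, 0 < c₁ ∧ 0 < c₂ ∧ ∀ x y : G, x ≠ y →
    c₁ * (wordDist S x y : ℝ) ^ (α - (N : ℝ)) ≤ R x y ∧
    R x y ≤ c₂ * (wordDist S x y : ℝ) ^ (α - (N : ℝ))

/-- Convolution `(R ∗ f)(x) = Σ_{y ≠ x} R x y f y`. -/
def conv [DecidableEq G] (R : G → G → ℝ) (f : G → ℝ) (x : G) : ℝ :=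
  ∑' y, if y = x then 0 else R x y * f y

/-- The convolution as an extended-nonnegative-real valued sum. -/
def convE [DecidableEq G] (R : G → G → ℝ) (f : G → ℝ) (x : G) : ℝ≥0∞ :=
  ∑' y, if y = x then 0 else ENNReal.ofReal (R x y * f y)

/-- Membership in `ℓ^q(G)`. -/
def Memlp (q : ℝ) (u : G → ℝ) : Prop := Summable fun x => |u x| ^ q

/-- The `ℓ^q` norm. -/
def lpNorm (q : ℝ) (u : G → ℝ) : ℝ := (∑' x, |u x| ^ q) ^ (1 / q)

/-- The `ℓ^∞` norm. -/
def supNorm (u : G → ℝ) : ℝ := ⨆ x, |u x|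

/-- The graph Laplacian `Δu(x) = Σ_{s ∈ S} (u(xs) - u(x))`. -/
def lap [Group G] (S : Finset G) (u : G → ℝ) (x : G) : ℝ :=
  ∑ s ∈ S, (u (x * s) - u x)

/-- The gradient form `∇u∇v(x) = (1/2) Σ_{s ∈ S} (u(xs)-u(x))(v(xs)-v(x))`. -/
def grad [Group G] (S : Finset G) (u v : G → ℝ) (x : G) : ℝ :=
  (1 / 2) * ∑ s ∈ S, (u (x * s) - u x) * (v (x * s) - v x)

/-- The density `|Δu|² + |∇u|² + (1 + λa)u²`. -/
def eDensity [Group G] (S : Finset G) (a : G → ℝ) (lam : ℝ) (u : G → ℝ) (x : G) : ℝ :=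
  (lap S u x) ^ 2 + grad S u u x + (1 + lam * a x) * (u x) ^ 2

/-- Membership in the space `E_λ`. -/
def MemE [Group G] (S : Finset G) (a : G → ℝ) (lam : ℝ) (u : G → ℝ) : Prop :=
  Summable (eDensity S a lam u)

/-- `‖u‖²_{E_λ}`. -/
def normEsq [Group G] (S : Finset G) (a : G → ℝ) (lam : ℝ) (u : G → ℝ) : ℝ :=
  ∑' x, eDensity S a lam u x

/-- `‖u‖_{E_λ}`. -/
def normE [Group G] (S : Finset G) (a : G → ℝ) (lam : ℝ) (u : G → ℝ) : ℝ :=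
  Real.sqrt (normEsq S a lam u)

/-- The inner product `⟨u, v⟩_{E_λ}`. -/
def innerE [Group G] (S : Finset G) (a : G → ℝ) (lam : ℝ) (u v : G → ℝ) : ℝ :=
  ∑' x, (lap S u x * lap S v x + grad S u v x + (1 + lam * a x) * (u x * v x))

/-- The nonlocal term `Σ_G (R_α ∗ |u|^p)|u|^p`. -/
def Dterm [DecidableEq G] (R : G → G → ℝ) (p : ℝ) (u : G → ℝ) : ℝ :=
  ∑' x, conv R (fun y => |u y| ^ p) x * |u x| ^ p

/-- The nonlocal pairing `Σ_G (R_α ∗ |u|^p)|u|^{p-2} u v`. -/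
def Kterm [DecidableEq G] (R : G → G → ℝ) (p : ℝ) (u v : G → ℝ) : ℝ :=
  ∑' x, conv R (fun y => |u y| ^ p) x * (|u x| ^ (p - 2) * u x * v x)

/-- The energy functional `J_λ`. -/
def Jfun [Group G] [DecidableEq G] (S : Finset G) (a : G → ℝ) (lam : ℝ)
    (R : G → G → ℝ) (p : ℝ) (u : G → ℝ) : ℝ :=
  (1 / 2) * normEsq S a lam u - (1 / (2 * p)) * Dterm R p u

/-- The derivative pairing `(J'_λ(u), v)`. -/
def Jd [Group G] [DecidableEq G] (S : Finset G) (a : G → ℝ) (lam : ℝ)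
    (R : G → G → ℝ) (p : ℝ) (u v : G → ℝ) : ℝ :=
  innerE S a lam u v - Kterm R p u v

/-- The Nehari manifold `N_λ`. -/
def nehari [Group G] [DecidableEq G] (S : Finset G) (a : G → ℝ) (lam : ℝ)
    (R : G → G → ℝ) (p : ℝ) : Set (G → ℝ) :=
  {u | MemE S a lam u ∧ u ≠ 0 ∧ Jd S a lam R p u u = 0}

/-- `m_λ = inf_{N_λ} J_λ`. -/
def mlam [Group G] [DecidableEq G] (S : Finset G) (a : G → ℝ) (lam : ℝ)
    (R : G → G → ℝ) (p : ℝ) : ℝ :=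
  sInf (Jfun S a lam R p '' nehari S a lam R p)

/-- The norm of `J'_λ(u)` in the dual space `E_λ*`. -/
def dualNorm [Group G] [DecidableEq G] (S : Finset G) (a : G → ℝ) (lam : ℝ)
    (R : G → G → ℝ) (p : ℝ) (u : G → ℝ) : ℝ :=
  sSup {t : ℝ | ∃ v, MemE S a lam v ∧ normEsq S a lam v ≤ 1 ∧ t = |Jd S a lam R p u v|}

/-- `(PS)_c` sequence for `J_λ`. -/
def PSseq [Group G] [DecidableEq G] (S : Finset G) (a : G → ℝ) (lam : ℝ)
    (R : G → G → ℝ) (p : ℝ) (c : ℝ) (U : ℕ → G → ℝ) : Prop :=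
  (∀ n, MemE S a lam (U n)) ∧
  Tendsto (fun n => Jfun S a lam R p (U n)) atTop (nhds c) ∧
  Tendsto (fun n => dualNorm S a lam R p (U n)) atTop (nhds 0)

/-- The Cayley graph of `(G, S)`. -/
def cayley [Group G] (S : Finset G) : SimpleGraph G :=
  SimpleGraph.fromRel (fun x y => x⁻¹ * y ∈ S)

/-- Condition (A₁): the potential well `Ω = {a = 0}` is nonempty, finite and connected. -/
def CondA1 [Group G] (S : Finset G) (a : G → ℝ) : Prop :=
  {x | a x = 0}.Nonempty ∧ {x | a x = 0}.Finite ∧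
  ((cayley S).induce {x | a x = 0}).Connected

/-- Condition (A₂): some sublevel set `{a ≤ M}` is finite and nonempty. -/
def CondA2 (a : G → ℝ) : Prop :=
  ∃ M : ℝ, 0 < M ∧ {x | a x ≤ M}.Finite ∧ {x | a x ≤ M}.Nonempty

/-- The density `|Δu|² + |∇u|² + u²` of the `W^{2,2}` norm. -/
def wDensity [Group G] (S : Finset G) (u : G → ℝ) (x : G) : ℝ :=
  (lap S u x) ^ 2 + grad S u u x + (u x) ^ 2

/-- Membership in `W^{2,2}(G)`. -/
def MemW [Group G] (S : Finset G) (u : G → ℝ) : Prop := Summable (wDensity S u)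

/-- `‖u‖²_{W^{2,2}}`. -/
def normWsq [Group G] (S : Finset G) (u : G → ℝ) : ℝ := ∑' x, wDensity S u x

/-- Membership in `E(Ω)`: vanishing outside `Ω`. -/
def MemEOm (Ω : Set G) (u : G → ℝ) : Prop := ∀ x ∉ Ω, u x = 0

/-- `‖u‖²_{E(Ω)}`. -/
def normOmSq [Group G] (S : Finset G) (Ω : Set G) (u : G → ℝ) : ℝ :=
  (∑' x, ((lap S u x) ^ 2 + grad S u u x)) + ∑' x : Ω, (u (x : G)) ^ 2

/-- The nonlocal term over `Ω`. -/
def DtermOm [DecidableEq G] (Ω : Set G) (R : G → G → ℝ) (p : ℝ) (u : G → ℝ) : ℝ :=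
  ∑' x : Ω, conv R (fun y => |u y| ^ p) (x : G) * |u (x : G)| ^ p

/-- The limiting energy functional `J_Ω`. -/
def JOm [Group G] [DecidableEq G] (S : Finset G) (Ω : Set G) (R : G → G → ℝ) (p : ℝ)
    (u : G → ℝ) : ℝ :=
  (1 / 2) * normOmSq S Ω u - (1 / (2 * p)) * DtermOm Ω R p u

/-- The derivative pairing `(J'_Ω(u), v)`. -/
def JdOm [Group G] [DecidableEq G] (S : Finset G) (Ω : Set G) (R : G → G → ℝ) (p : ℝ)
    (u v : G → ℝ) : ℝ :=
  (∑' x, (lap S u x * lap S v x + grad S u v x)) + (∑' x : Ω, u (x : G) * v (x : G))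
    - ∑' x : Ω, conv R (fun y => |u y| ^ p) (x : G) * (|u (x : G)| ^ (p - 2) * u (x : G) * v (x : G))

/-- The Nehari manifold `N_Ω`. -/
def nehariOm [Group G] [DecidableEq G] (S : Finset G) (Ω : Set G) (R : G → G → ℝ)
    (p : ℝ) : Set (G → ℝ) :=
  {u | MemEOm Ω u ∧ u ≠ 0 ∧ JdOm S Ω R p u u = 0}

/-- `m_Ω = inf_{N_Ω} J_Ω`. -/
def mOm [Group G] [DecidableEq G] (S : Finset G) (Ω : Set G) (R : G → G → ℝ) (p : ℝ) : ℝ :=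
  sInf (JOm S Ω R p '' nehariOm S Ω R p)

/-- Weak convergence lemma. -/
lemma weak_tendsto {ι : Type*} {s t : ℝ} (hst : s.HolderConjugate t) (h : ι → ℝ)
    (hh : ∀ x, 0 ≤ h x) (hhs : Summable fun x => h x ^ t) (g : ℕ → ι → ℝ)
    (hg : ∀ n x, 0 ≤ g n x) (hgs : ∀ n, Summable fun x => g n x ^ s) (M : ℝ)
    (hM : ∀ n, ∑' x, g n x ^ s ≤ M)
    (hlim : ∀ x, Tendsto (fun n => g n x) atTop (nhds 0)) :
    Tendsto (fun n => ∑' x, h x * g n x) atTop (nhds 0) := by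
  have hM0 : 0 ≤ M := le_trans (tsum_nonneg fun x => Real.rpow_nonneg (hg 0 x) s) (hM 0)
  have htail : Tendsto (fun F : Finset ι => (∑' x : {x // x ∉ F}, h x ^ t) ^ (1 / t) * M ^ (1 / s))
      atTop (nhds 0) := by
    have h1 := tendsto_tsum_compl_atTop_zero (fun x => h x ^ t)
    have h2 := (h1.rpow_const (p := 1 / t) (Or.inr (by
      have := hst.symm.pos; positivity))).mul_const (M ^ (1 / s))
    rwa [Real.zero_rpow (by have := hst.symm.pos; positivity), zero_mul] at h2
  have hsum : ∀ n, Summable fun x => h x * g n x := fun n =>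
    (Real.summable_and_inner_le_Lp_mul_Lq_tsum_of_nonneg hst.symm hh (hg n) hhs (hgs n)).1
  rw [Metric.tendsto_atTop]
  intro ε hε
  obtain ⟨F, hF⟩ := (htail.eventually (gt_mem_nhds (half_pos hε))).exists
  have hfin : Tendsto (fun n => ∑ x ∈ F, h x * g n x) atTop (nhds 0) := by
    have := tendsto_finsetSum (f := fun x n => h x * g n x) (x := atTop) (a := fun _ => (0:ℝ)) F
      (fun x _ => by simpa using (hlim x).const_mul (h x))
    simpa using this
  obtain ⟨n0, hn0⟩ := eventually_atTop.1 (hfin.eventually (gt_mem_nhds (half_pos hε)))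
  refine ⟨n0, fun n hn => ?_⟩
  have h3 := hn0 n hn
  rw [Real.dist_eq, sub_zero, abs_of_nonneg (tsum_nonneg fun x => mul_nonneg (hh x) (hg n x)),
    ← (hsum n).sum_add_tsum_compl (s := F)]
  have h4 : ∑' x : ((F : Set ι)ᶜ : Set ι), h x * g n x ≤
      (∑' x : ((F : Set ι)ᶜ : Set ι), h x ^ t) ^ (1 / t) *
      (∑' x : ((F : Set ι)ᶜ : Set ι), g n x ^ s) ^ (1 / s) :=
    Real.inner_le_Lp_mul_Lq_tsum_of_nonneg hst.symm (fun x => hh x) (fun x => hg n x)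
      (hhs.subtype _) ((hgs n).subtype _)
  have h5 : ∑' x : ((F : Set ι)ᶜ : Set ι), g n x ^ s ≤ M :=
    le_trans ((hgs n).tsum_subtype_le (fun x => g n x ^ s) _ (fun x => Real.rpow_nonneg (hg n x) s)) (hM n)
  have h6 : (∑' x : ((F : Set ι)ᶜ : Set ι), g n x ^ s) ^ (1 / s) ≤ M ^ (1 / s) :=
    Real.rpow_le_rpow (tsum_nonneg fun x => Real.rpow_nonneg (hg n x) s) h5
      (by have := hst.pos; positivity)
  have h7 : ∑' x : ((F : Set ι)ᶜ : Set ι), h x * g n x ≤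
      (∑' x : ((F : Set ι)ᶜ : Set ι), h x ^ t) ^ (1 / t) * M ^ (1 / s) :=
    h4.trans (mul_le_mul_of_nonneg_left h6
      (Real.rpow_nonneg (tsum_nonneg fun (x : ((F : Set ι)ᶜ : Set ι)) => Real.rpow_nonneg (hh x) t) _))
  have h8 : (∑' x : ((F : Set ι)ᶜ : Set ι), h x ^ t) ^ (1 / t) * M ^ (1 / s) < ε / 2 := hF
  linarith

/-- Kernel assumptions. -/
structure KBound {ι : Type*} (κ : ι → ι → ℝ) (s t A : ℝ) : Prop where
  conj : s.HolderConjugate t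
  two_lt : 2 < t
  nonneg : ∀ x y, 0 ≤ κ x y
  row : ∀ x (Y : Finset ι), ∑ y ∈ Y, κ x y ^ (t / 2) ≤ A
  col : ∀ y (X : Finset ι), ∑ x ∈ X, κ x y ^ (t / 2) ≤ A

lemma KBound.A_nonneg {ι : Type*} {κ : ι → ι → ℝ} {s t A : ℝ} (hk : KBound κ s t A) (x : ι) :
    0 ≤ A := by simpa using hk.row x ∅

lemma young_pt {s t k f g : ℝ} (hst : s.HolderConjugate t) (ht : 2 < t) (hk : 0 ≤ k) (hf : 0 ≤ f)
    (hg : 0 ≤ g) : k * f * g ≤ (1 - 2 / t) * (f ^ s * g ^ s) + (1 / t) * (f ^ s * k ^ (t / 2))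
      + (1 / t) * (k ^ (t / 2) * g ^ s) := by
  have ht0 : 0 < t := by linarith
  have hs0 := hst.pos
  have h1 : 0 ≤ 1 - 2 / t := by
    rw [sub_nonneg, div_le_one ht0]; exact ht.le
  have hF := Real.rpow_nonneg hf s
  have hG := Real.rpow_nonneg hg s
  have hK := Real.rpow_nonneg hk (t / 2)
  have key := Real.geom_mean_le_arith_mean3_weighted (w₁ := 1 - 2 / t) (w₂ := 1 / t) (w₃ := 1 / t)
    h1 (by positivity) (by positivity) (mul_nonneg hF hG) (mul_nonneg hF hK) (mul_nonneg hK hG)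
    (by ring)
  refine le_trans (le_of_eq ?_) key
  have hst1 : s * (1 - 2 / t) + s * (1 / t) = 1 := by
    have := hst.inv_add_inv_eq_one
    field_simp at this ⊢
    nlinarith
  rw [Real.mul_rpow hF hG, Real.mul_rpow hF hK, Real.mul_rpow hK hG,
    ← Real.rpow_mul hf, ← Real.rpow_mul hg, ← Real.rpow_mul hf, ← Real.rpow_mul hg,
    ← Real.rpow_mul hk]
  have e1 : f = f ^ (s * (1 - 2 / t)) * f ^ (s * (1 / t)) := by
    rw [← Real.rpow_add_of_nonneg hf (by positivity) (by positivity), hst1, Real.rpow_one]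
  have e2 : g = g ^ (s * (1 - 2 / t)) * g ^ (s * (1 / t)) := by
    rw [← Real.rpow_add_of_nonneg hg (by positivity) (by positivity), hst1, Real.rpow_one]
  have e3 : k = k ^ (t / 2 * (1 / t)) * k ^ (t / 2 * (1 / t)) := by
    rw [← Real.rpow_add_of_nonneg hk (by positivity) (by positivity)]
    rw [show t / 2 * (1 / t) + t / 2 * (1 / t) = 1 by field_simp; norm_num, Real.rpow_one]
  conv_lhs => rw [e1, e2, e3]
  ring

/-- The constant in Young's inequality. -/
def CY (t A : ℝ) : ℝ := (1 - 2 / t) + 2 * A / t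

lemma young_norm {ι : Type*} {κ : ι → ι → ℝ} {s t A : ℝ} (hk : KBound κ s t A) (hA : 0 ≤ A)
    {f g : ι → ℝ}
    (hf : ∀ x, 0 ≤ f x) (hg : ∀ x, 0 ≤ g x) (X Y : Finset ι) (hF : ∑ y ∈ Y, f y ^ s ≤ 1)
    (hG : ∑ x ∈ X, g x ^ s ≤ 1) : ∑ x ∈ X, ∑ y ∈ Y, κ x y * f y * g x ≤ CY t A := by
  have ht := hk.two_lt
  have ht0 : 0 < t := by linarith
  have h1 : 0 ≤ 1 - 2 / t := by
    rw [sub_nonneg, div_le_one ht0]; exact ht.le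
  have hF0 : 0 ≤ ∑ y ∈ Y, f y ^ s := Finset.sum_nonneg fun y _ => Real.rpow_nonneg (hf y) s
  have hG0 : 0 ≤ ∑ y ∈ X, g y ^ s := Finset.sum_nonneg fun y _ => Real.rpow_nonneg (hg y) s
  have b1 : ∑ x ∈ X, ∑ y ∈ Y, f y ^ s * g x ^ s ≤ 1 := by
    have : ∑ x ∈ X, ∑ y ∈ Y, f y ^ s * g x ^ s = (∑ y ∈ Y, f y ^ s) * ∑ x ∈ X, g x ^ s := by
      rw [Finset.sum_mul_sum, Finset.sum_comm]
    rw [this]; nlinarith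
  have b2 : ∑ x ∈ X, ∑ y ∈ Y, f y ^ s * κ x y ^ (t / 2) ≤ A := by
    rw [Finset.sum_comm]
    calc _ = ∑ y ∈ Y, f y ^ s * ∑ x ∈ X, κ x y ^ (t / 2) := by simp_rw [Finset.mul_sum]
      _ ≤ ∑ y ∈ Y, f y ^ s * A := Finset.sum_le_sum fun y _ =>
          mul_le_mul_of_nonneg_left (hk.col y X) (Real.rpow_nonneg (hf y) s)
      _ = (∑ y ∈ Y, f y ^ s) * A := by rw [Finset.sum_mul]
      _ ≤ A := by nlinarith
  have b3 : ∑ x ∈ X, ∑ y ∈ Y, κ x y ^ (t / 2) * g x ^ s ≤ A := by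
    calc _ = ∑ x ∈ X, (∑ y ∈ Y, κ x y ^ (t / 2)) * g x ^ s := by simp_rw [Finset.sum_mul]
      _ ≤ ∑ x ∈ X, A * g x ^ s := Finset.sum_le_sum fun x _ =>
          mul_le_mul_of_nonneg_right (hk.row x Y) (Real.rpow_nonneg (hg x) s)
      _ = A * (∑ x ∈ X, g x ^ s) := by rw [Finset.mul_sum]
      _ ≤ A := by nlinarith
  calc _ ≤ ∑ x ∈ X, ∑ y ∈ Y, ((1 - 2 / t) * (f y ^ s * g x ^ s) +
        (1 / t) * (f y ^ s * κ x y ^ (t / 2)) + (1 / t) * (κ x y ^ (t / 2) * g x ^ s)) :=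
        Finset.sum_le_sum fun x _ => Finset.sum_le_sum fun y _ =>
          young_pt hk.conj ht (hk.nonneg x y) (hf y) (hg x)
    _ = (1 - 2 / t) * ∑ x ∈ X, ∑ y ∈ Y, f y ^ s * g x ^ s +
        (1 / t) * ∑ x ∈ X, ∑ y ∈ Y, f y ^ s * κ x y ^ (t / 2) +
        (1 / t) * ∑ x ∈ X, ∑ y ∈ Y, κ x y ^ (t / 2) * g x ^ s := by
        simp_rw [Finset.sum_add_distrib, Finset.mul_sum]
    _ ≤ (1 - 2 / t) * 1 + (1 / t) * A + (1 / t) * A := by gcongr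
    _ = CY t A := by unfold CY; ring

lemma CY_nonneg {t A : ℝ} (ht : 2 < t) (hA : 0 ≤ A) : 0 ≤ CY t A := by
  have ht0 : 0 < t := by linarith
  have h1 : 0 ≤ 1 - 2 / t := by
    rw [sub_nonneg, div_le_one ht0]; exact ht.le
  unfold CY; positivity

lemma young_fin {ι : Type*} {κ : ι → ι → ℝ} {s t A : ℝ} (hk : KBound κ s t A) (hA : 0 ≤ A)
    {f g : ι → ℝ} (hf : ∀ x, 0 ≤ f x) (hg : ∀ x, 0 ≤ g x) (X Y : Finset ι) :
    ∑ x ∈ X, ∑ y ∈ Y, κ x y * f y * g x ≤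
      CY t A * (∑ y ∈ Y, f y ^ s) ^ (1 / s) * (∑ x ∈ X, g x ^ s) ^ (1 / s) := by
  have hs0 := hk.conj.pos
  have hzero : ∀ (h : ι → ℝ), (∀ x, 0 ≤ h x) → ∀ Z : Finset ι, ∑ z ∈ Z, h z ^ s = 0 →
      ∀ z ∈ Z, h z = 0 := by
    intro h hh Z hZ z hz
    have := (Finset.sum_eq_zero_iff_of_nonneg (fun z _ => Real.rpow_nonneg (hh z) s)).1 hZ z hz
    exact (Real.rpow_eq_zero (hh z) hs0.ne').1 this
  have hF0 : 0 ≤ ∑ y ∈ Y, f y ^ s := Finset.sum_nonneg fun y _ => Real.rpow_nonneg (hf y) s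
  have hG0 : 0 ≤ ∑ y ∈ X, g y ^ s := Finset.sum_nonneg fun y _ => Real.rpow_nonneg (hg y) s
  have hC := CY_nonneg hk.two_lt hA
  rcases hF0.eq_or_lt with hF | hF
  · rw [Finset.sum_eq_zero fun x hx => Finset.sum_eq_zero fun y hy => by
      rw [hzero f hf Y hF.symm y hy]; ring]
    positivity
  rcases hG0.eq_or_lt with hG | hG
  · rw [Finset.sum_eq_zero fun x hx => Finset.sum_eq_zero fun y hy => by
      rw [hzero g hg X hG.symm x hx]; ring]
    positivity
  set F := ∑ y ∈ Y, f y ^ s with hFd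
  set H := ∑ x ∈ X, g x ^ s with hHd
  have hFp : 0 < F ^ (1 / s) := Real.rpow_pos_of_pos hF _
  have hHp : 0 < H ^ (1 / s) := Real.rpow_pos_of_pos hG _
  have hnorm : ∀ (h : ι → ℝ), (∀ x, 0 ≤ h x) → ∀ Z : Finset ι, 0 < ∑ z ∈ Z, h z ^ s →
      ∑ z ∈ Z, (h z / (∑ z ∈ Z, h z ^ s) ^ (1 / s)) ^ s ≤ 1 := by
    intro h hh Z hZ
    have : ∀ z ∈ Z, (h z / (∑ z ∈ Z, h z ^ s) ^ (1 / s)) ^ s = h z ^ s / (∑ z ∈ Z, h z ^ s) := by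
      intro z _
      rw [Real.div_rpow (hh z) (Real.rpow_nonneg hZ.le _), ← Real.rpow_mul hZ.le,
        one_div_mul_cancel hs0.ne', Real.rpow_one]
    rw [Finset.sum_congr rfl this, ← Finset.sum_div, div_self hZ.ne']
  have := young_norm hk hA (f := fun y => f y / F ^ (1 / s)) (g := fun x => g x / H ^ (1 / s))
    (fun y => div_nonneg (hf y) hFp.le) (fun y => div_nonneg (hg y) hHp.le) X Y
    (hnorm f hf Y hF) (hnorm g hg X hG)
  have e : ∑ x ∈ X, ∑ y ∈ Y, κ x y * (f y / F ^ (1 / s)) * (g x / H ^ (1 / s)) =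
      (∑ x ∈ X, ∑ y ∈ Y, κ x y * f y * g x) / (F ^ (1 / s) * H ^ (1 / s)) := by
    simp_rw [Finset.sum_div]
    refine Finset.sum_congr rfl fun x _ => Finset.sum_congr rfl fun y _ => ?_
    field_simp
  rw [e, div_le_iff₀ (by positivity)] at this
  linarith

/-- The `ℓ^s` norm of a nonnegative function. -/
def Pn {ι : Type*} (s : ℝ) (f : ι → ℝ) : ℝ := (∑' x, f x ^ s) ^ (1 / s)

/-- The potential of `f`. -/
def pot {ι : Type*} (κ : ι → ι → ℝ) (f : ι → ℝ) (x : ι) : ℝ := ∑' y, κ x y * f y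

lemma Pn_nonneg {ι : Type*} (s : ℝ) {f : ι → ℝ} (hf : ∀ x, 0 ≤ f x) : 0 ≤ Pn s f :=
  Real.rpow_nonneg (tsum_nonneg fun x => Real.rpow_nonneg (hf x) s) _

lemma fin_le_Pn {ι : Type*} {s : ℝ} (hs : 0 < s) {f : ι → ℝ} (hf : ∀ x, 0 ≤ f x)
    (hfs : Summable fun x => f x ^ s) (Y : Finset ι) : (∑ y ∈ Y, f y ^ s) ^ (1 / s) ≤ Pn s f :=
  Real.rpow_le_rpow (Finset.sum_nonneg fun y _ => Real.rpow_nonneg (hf y) s)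
    (hfs.sum_le_tsum Y fun y _ => Real.rpow_nonneg (hf y) s) (by positivity)

lemma pot_summable {ι : Type*} {κ : ι → ι → ℝ} {s t A : ℝ} (hk : KBound κ s t A)
    {f : ι → ℝ} (hf : ∀ x, 0 ≤ f x) (hfs : Summable fun x => f x ^ s) (x : ι) :
    Summable fun y => κ x y * f y := by
  classical
  have hA := hk.A_nonneg x
  refine summable_of_sum_le (c := CY t A * Pn s f) (fun y => mul_nonneg (hk.nonneg x y) (hf y)) ?_
  intro Y
  have := young_fin hk hA hf (g := fun _ => (1:ℝ)) (fun _ => zero_le_one) {x} Y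
  simp only [Finset.sum_singleton, mul_one, Real.one_rpow] at this
  exact this.trans (mul_le_mul_of_nonneg_left (fin_le_Pn hk.conj.pos hf hfs Y)
    (CY_nonneg hk.two_lt hA))

lemma pot_nonneg {ι : Type*} {κ : ι → ι → ℝ} {s t A : ℝ} (hk : KBound κ s t A)
    {f : ι → ℝ} (hf : ∀ x, 0 ≤ f x) (x : ι) : 0 ≤ pot κ f x :=
  tsum_nonneg fun y => mul_nonneg (hk.nonneg x y) (hf y)

lemma pot_fin {ι : Type*} {κ : ι → ι → ℝ} {s t A : ℝ} (hk : KBound κ s t A) (hA : 0 ≤ A)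
    {f g : ι → ℝ} (hf : ∀ x, 0 ≤ f x) (hfs : Summable fun x => f x ^ s) (hg : ∀ x, 0 ≤ g x)
    (X : Finset ι) : ∑ x ∈ X, pot κ f x * g x ≤
      CY t A * Pn s f * (∑ x ∈ X, g x ^ s) ^ (1 / s) := by
  have e : ∑ x ∈ X, pot κ f x * g x = ∑' y, ∑ x ∈ X, κ x y * f y * g x := by
    rw [Summable.tsum_finsetSum fun x _ => (pot_summable hk hf hfs x).mul_right _]
    refine Finset.sum_congr rfl fun x _ => ?_
    rw [tsum_mul_right, pot]
  rw [e]
  refine Real.tsum_le_of_sum_le (fun y => Finset.sum_nonneg fun x _ =>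
    mul_nonneg (mul_nonneg (hk.nonneg x y) (hf y)) (hg x)) fun Y => ?_
  rw [Finset.sum_comm]
  refine (young_fin hk hA hf hg X Y).trans ?_
  have hG0 : 0 ≤ ∑ y ∈ X, g y ^ s := Finset.sum_nonneg fun y _ => Real.rpow_nonneg (hg y) s
  exact mul_le_mul_of_nonneg_right (mul_le_mul_of_nonneg_left (fin_le_Pn hk.conj.pos hf hfs Y)
    (CY_nonneg hk.two_lt hA)) (Real.rpow_nonneg hG0 _)

lemma pot_pair {ι : Type*} {κ : ι → ι → ℝ} {s t A : ℝ} (hk : KBound κ s t A) (hA : 0 ≤ A)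
    {f g : ι → ℝ} (hf : ∀ x, 0 ≤ f x) (hfs : Summable fun x => f x ^ s) (hg : ∀ x, 0 ≤ g x)
    (hgs : Summable fun x => g x ^ s) :
    (Summable fun x => pot κ f x * g x) ∧ ∑' x, pot κ f x * g x ≤ CY t A * Pn s f * Pn s g := by
  have hb : ∀ X : Finset ι, ∑ x ∈ X, pot κ f x * g x ≤ CY t A * Pn s f * Pn s g := fun X =>
    (pot_fin hk hA hf hfs hg X).trans (mul_le_mul_of_nonneg_left (fin_le_Pn hk.conj.pos hg hgs X)
      (mul_nonneg (CY_nonneg hk.two_lt hA) (Pn_nonneg s hf)))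
  have hn : ∀ x, 0 ≤ pot κ f x * g x := fun x => mul_nonneg (pot_nonneg hk hf x) (hg x)
  exact ⟨summable_of_sum_le hn hb, Real.tsum_le_of_sum_le hn hb⟩

lemma pot_mem {ι : Type*} {κ : ι → ι → ℝ} {s t A : ℝ} (hk : KBound κ s t A) (hA : 0 ≤ A)
    {f : ι → ℝ} (hf : ∀ x, 0 ≤ f x) (hfs : Summable fun x => f x ^ s) :
    Summable fun x => pot κ f x ^ t := by
  have ht0 := hk.conj.symm.pos
  have hs0 := hk.conj.pos
  have hp0 := pot_nonneg hk hf
  set D := CY t A * Pn s f with hD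
  have hD0 : 0 ≤ D := mul_nonneg (CY_nonneg hk.two_lt hA) (Pn_nonneg s hf)
  refine summable_of_sum_le (c := D ^ t) (fun x => Real.rpow_nonneg (hp0 x) t) fun X => ?_
  have h := pot_fin hk hA hf hfs (g := fun x => pot κ f x ^ (t - 1))
    (fun x => Real.rpow_nonneg (hp0 x) _) X
  have ht1 : 0 < t - 1 := by linarith [hk.two_lt]
  have e1 : ∀ x, pot κ f x * pot κ f x ^ (t - 1) = pot κ f x ^ t := fun x => by
    conv_lhs => rw [← Real.rpow_one (pot κ f x), ← Real.rpow_mul (hp0 x), one_mul]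
    rw [← Real.rpow_add_of_nonneg (hp0 x) zero_le_one ht1.le]; congr 1; ring
  have hts : (t - 1) * s = t := by
    have := hk.conj.inv_add_inv_eq_one
    field_simp at this
    linarith
  have e2 : ∀ x, (pot κ f x ^ (t - 1)) ^ s = pot κ f x ^ t := fun x => by
    rw [← Real.rpow_mul (hp0 x), hts]
  simp only [e1, e2] at h
  have hT0 : 0 ≤ ∑ x ∈ X, pot κ f x ^ t :=
    Finset.sum_nonneg fun x _ => Real.rpow_nonneg (hp0 x) t
  rcases hT0.eq_or_lt with hT | hT
  · rw [← hT]; positivity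
  set T := ∑ x ∈ X, pot κ f x ^ t
  have e3 : T = T ^ (1 / t) * T ^ (1 / s) := by
    rw [← Real.rpow_add hT]
    have := hk.conj.inv_add_inv_eq_one
    rw [show 1 / t + 1 / s = 1 by rw [one_div, one_div]; linarith, Real.rpow_one]
  have hTs : 0 < T ^ (1 / s) := Real.rpow_pos_of_pos hT _
  have h' : T ^ (1 / t) ≤ D := by
    have : T ^ (1 / t) * T ^ (1 / s) ≤ D * T ^ (1 / s) := by rw [← e3]; exact h
    exact le_of_mul_le_mul_right this hTs
  calc T = (T ^ (1 / t)) ^ t := by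
        rw [← Real.rpow_mul hT0, one_div_mul_cancel ht0.ne', Real.rpow_one]
    _ ≤ D ^ t := Real.rpow_le_rpow (Real.rpow_nonneg hT0 _) h' ht0.le

lemma len_sum [Group G] {S : Finset G} {N : ℕ} (hg : PolyGrowth S N) {β : ℝ} (hβ : (N : ℝ) < β) :
    ∃ A : ℝ, 0 ≤ A ∧ ∀ F : Finset G, ∑ z ∈ F, (wordDist S z 1 : ℝ) ^ (-β) ≤ A := by
  classical
  obtain ⟨C₁, C₂, hC1, hC2, hb⟩ := hg
  set ρ : ℝ := 2 ^ ((N : ℝ) - β) with hρ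
  have hρ0 : 0 < ρ := by positivity
  have hρ1 : ρ < 1 := Real.rpow_lt_one_of_one_lt_of_neg (by norm_num) (by linarith)
  have hβ0 : 0 < β := lt_of_le_of_lt (Nat.cast_nonneg N) hβ
  refine ⟨C₂ * 2 ^ N * (1 - ρ)⁻¹, by have : 0 < 1 - ρ := by linarith
                                     positivity, fun F => ?_⟩
  set F' := F.filter (fun z => wordDist S z 1 ≠ 0) with hF'
  have h1 : ∑ z ∈ F, (wordDist S z 1 : ℝ) ^ (-β) = ∑ z ∈ F', (wordDist S z 1 : ℝ) ^ (-β) := by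
    rw [hF', Finset.sum_filter]
    refine Finset.sum_congr rfl fun z _ => ?_
    split_ifs with h
    · rfl
    · push Not at h
      rw [h, Nat.cast_zero, Real.zero_rpow (by linarith)]
  have h2 : ∀ z ∈ F', (wordDist S z 1 : ℝ) ^ (-β) ≤
      (fun k : ℕ => ((2 : ℝ) ^ (-β)) ^ k) (Nat.log 2 (wordDist S z 1)) := by
    intro z hz
    have hz' : wordDist S z 1 ≠ 0 := (Finset.mem_filter.1 hz).2
    have hle := Nat.pow_log_le_self 2 hz'
    have hle' : (2 : ℝ) ^ (Nat.log 2 (wordDist S z 1)) ≤ (wordDist S z 1 : ℝ) := by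
      exact_mod_cast hle
    have := Real.rpow_le_rpow_of_nonpos (z := -β) (by positivity) hle' (by linarith)
    refine this.trans (le_of_eq ?_)
    rw [← Real.rpow_natCast, ← Real.rpow_mul (by norm_num), mul_comm, Real.rpow_mul (by norm_num),
      Real.rpow_natCast]
  have h3 : ∀ k : ℕ, ((F'.filter fun z => Nat.log 2 (wordDist S z 1) = k).card : ℝ) ≤
      C₂ * 2 ^ N * (2 ^ (N : ℝ)) ^ k := by
    intro k
    have hr : (1 : ℝ) ≤ 2 ^ (k + 1) := one_le_pow₀ (by norm_num)
    obtain ⟨hl, hu⟩ := hb (2 ^ (k + 1)) hr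
    have hfin : (ball S (1 : G) (2 ^ (k + 1))).Finite := by
      apply Set.finite_of_ncard_ne_zero
      intro h0
      rw [h0, Nat.cast_zero] at hl
      have : 0 < C₁ * ((2 : ℝ) ^ (k + 1)) ^ N := by positivity
      linarith
    have hsub : ((F'.filter fun z => Nat.log 2 (wordDist S z 1) = k : Finset G) : Set G) ⊆
        ball S (1 : G) (2 ^ (k + 1)) := by
      intro z hz
      have hz2 := (Finset.mem_filter.1 (Finset.mem_coe.1 hz)).2
      have := Nat.lt_pow_succ_log_self (b := 2) (by norm_num) (wordDist S z 1)
      rw [hz2] at this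
      show (wordDist S z 1 : ℝ) ≤ 2 ^ (k + 1)
      exact_mod_cast this.le
    have hc := Set.ncard_le_ncard hsub hfin
    rw [Set.ncard_coe_finset] at hc
    have hc' : ((F'.filter fun z => Nat.log 2 (wordDist S z 1) = k).card : ℝ) ≤
      ((ball S (1 : G) (2 ^ (k + 1))).ncard : ℝ) := by exact_mod_cast hc
    refine (hc'.trans hu).trans (le_of_eq ?_)
    rw [Real.rpow_natCast]; ring
  rw [h1]
  calc _ ≤ ∑ z ∈ F', (fun k : ℕ => ((2 : ℝ) ^ (-β)) ^ k) (Nat.log 2 (wordDist S z 1)) :=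
        Finset.sum_le_sum h2
    _ = ∑ k ∈ F'.image (fun z => Nat.log 2 (wordDist S z 1)),
        (F'.filter fun z => Nat.log 2 (wordDist S z 1) = k).card • ((2 : ℝ) ^ (-β)) ^ k :=
        Finset.sum_comp (fun k : ℕ => ((2 : ℝ) ^ (-β)) ^ k) (fun z => Nat.log 2 (wordDist S z 1))
    _ ≤ ∑ k ∈ F'.image (fun z => Nat.log 2 (wordDist S z 1)), C₂ * 2 ^ N * ρ ^ k := by
        refine Finset.sum_le_sum fun k _ => ?_
        rw [nsmul_eq_mul]
        refine (mul_le_mul_of_nonneg_right (h3 k) (by positivity)).trans (le_of_eq ?_)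
        rw [mul_assoc, ← mul_pow, ← Real.rpow_add (by norm_num), hρ, sub_eq_add_neg]
    _ = C₂ * 2 ^ N * ∑ k ∈ F'.image (fun z => Nat.log 2 (wordDist S z 1)), ρ ^ k := by
        rw [Finset.mul_sum]
    _ ≤ C₂ * 2 ^ N * (1 - ρ)⁻¹ := by
        refine mul_le_mul_of_nonneg_left ?_ (by positivity)
        rw [← tsum_geometric_of_lt_one hρ0.le hρ1]
        exact (summable_geometric_of_lt_one hρ0.le hρ1).sum_le_tsum _ fun k _ => by positivity

/-- Off-diagonal kernel. -/
def kap [DecidableEq G] (R : G → G → ℝ) (x y : G) : ℝ := if y = x then 0 else R x y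

lemma conv_eq_pot [DecidableEq G] (R : G → G → ℝ) (f : G → ℝ) (x : G) :
    conv R f x = pot (kap R) f x := by
  unfold conv pot kap
  refine tsum_congr fun y => ?_
  split_ifs <;> simp

lemma wordDist_eq [Group G] (S : Finset G) (x y : G) :
    wordDist S x y = wordDist S (y⁻¹ * x) 1 := by
  unfold wordDist; simp

lemma kap_bound [Group G] [DecidableEq G] {S : Finset G} {N : ℕ} (hg : PolyGrowth S N) {α : ℝ}
    {R : G → G → ℝ} (hR : RieszKernel S N α R) {s t : ℝ}
    (hst : s.HolderConjugate t) (ht : 2 < t) (hN : (N : ℝ) < (N - α) * (t / 2)) :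
    ∃ A, 0 ≤ A ∧ KBound (kap R) s t A := by
  obtain ⟨A, hA, hAb⟩ := len_sum hg hN
  obtain ⟨hpos, c₁, c₂, hc1, hc2, hb⟩ := hR
  have hkn : ∀ x y, 0 ≤ kap R x y := fun x y => by
    unfold kap; split_ifs
    exacts [le_rfl, (hpos x y).le]
  have hpt : ∀ x y, kap R x y ^ (t / 2) ≤
      c₂ ^ (t / 2) * (wordDist S (y⁻¹ * x) 1 : ℝ) ^ (-((N - α) * (t / 2))) := by
    intro x y
    have ht2 : 0 < t / 2 := by linarith
    by_cases h : y = x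
    · unfold kap
      rw [if_pos h, Real.zero_rpow ht2.ne']
      positivity
    · have h1 := (hb x y (Ne.symm h)).2
      rw [wordDist_eq] at h1
      have h2 : kap R x y = R x y := by unfold kap; rw [if_neg h]
      rw [h2]
      refine (Real.rpow_le_rpow (hpos x y).le h1 ht2.le).trans (le_of_eq ?_)
      rw [Real.mul_rpow hc2.le (by positivity), ← Real.rpow_mul (by positivity)]
      congr 2; ring
  refine ⟨c₂ ^ (t / 2) * A, by positivity, ⟨hst, ht, hkn, ?_, ?_⟩⟩
  · intro x Y
    refine (Finset.sum_le_sum fun y _ => hpt x y).trans ?_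
    rw [← Finset.mul_sum]
    refine mul_le_mul_of_nonneg_left ?_ (by positivity)
    rw [← Finset.sum_image (s := Y) (g := fun y => y⁻¹ * x)
      (f := fun z => (wordDist S z 1 : ℝ) ^ (-((N - α) * (t / 2))))]
    · exact hAb _
    · intro y _ y' _ h; simpa using h
  · intro y X
    refine (Finset.sum_le_sum fun x _ => hpt x y).trans ?_
    rw [← Finset.mul_sum]
    refine mul_le_mul_of_nonneg_left ?_ (by positivity)
    rw [← Finset.sum_image (s := X) (g := fun x => y⁻¹ * x)
      (f := fun z => (wordDist S z 1 : ℝ) ^ (-((N - α) * (t / 2))))]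
    · exact hAb _
    · intro y _ y' _ h; simpa using h

/-- Choice of exponents. -/
lemma exists_exp {N : ℕ} (hN : 2 ≤ N) {α p : ℝ} (hα0 : 0 < α) (hαN : α < N)
    (hp : ((N : ℝ) + α) / N < p) : ∃ s t : ℝ, s.HolderConjugate t ∧ 2 < t ∧
      (N : ℝ) < (N - α) * (t / 2) ∧ 2 ≤ p * s := by
  have hN0 : (0 : ℝ) < N := by positivity
  have hp1 : 1 < p := lt_trans (by rw [lt_div_iff₀ hN0]; linarith) hp
  have hp0 : 0 < p := by linarith
  have h1 : max 1 (2 / p) < 2 * N / (N + α) := by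
    rw [max_lt_iff]
    constructor
    · rw [lt_div_iff₀ (by linarith)]; linarith
    · rw [div_lt_iff₀ hN0] at hp
      rw [div_lt_div_iff₀ hp0 (by linarith)]; nlinarith
  obtain ⟨s, hs1, hs2⟩ := exists_between h1
  obtain ⟨hs3, hs4⟩ := max_lt_iff.1 hs1
  rw [lt_div_iff₀ (by linarith)] at hs2
  rw [div_lt_iff₀ hp0] at hs4
  have hsm : 0 < s - 1 := by linarith
  refine ⟨s, s / (s - 1), Real.HolderConjugate.conjExponent hs3, ?_, ?_, by nlinarith⟩
  · rw [lt_div_iff₀ hsm]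
    have : s * N < 2 * N := by nlinarith
    nlinarith [lt_of_mul_lt_mul_right this hN0.le]
  · rw [div_div, mul_div_assoc', lt_div_iff₀ (by positivity)]
    nlinarith

lemma lq_bound {ι : Type*} {u : ι → ℝ} {q : ℝ} (hq : 2 ≤ q) (hu : Summable fun x => u x ^ 2) :
    (Summable fun x => |u x| ^ q) ∧ ∑' x, |u x| ^ q ≤ (∑' x, u x ^ 2) ^ (q / 2) := by
  set T := ∑' x, u x ^ 2 with hT
  have hT0 : 0 ≤ T := tsum_nonneg fun x => sq_nonneg _
  have hpt : ∀ x, |u x| ^ q ≤ u x ^ 2 * T ^ (q / 2 - 1) := by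
    intro x
    have h1 : |u x| ^ q = (u x ^ 2) ^ (q / 2) := by
      rw [← sq_abs, ← Real.rpow_natCast, ← Real.rpow_mul (abs_nonneg _)]
      congr 1; push_cast; ring
    have h2 : (u x ^ 2) ^ (q / 2) = u x ^ 2 * (u x ^ 2) ^ (q / 2 - 1) := by
      conv_rhs => rw [← Real.rpow_one (u x ^ 2), ← Real.rpow_mul (sq_nonneg _), one_mul]
      rw [← Real.rpow_add_of_nonneg (sq_nonneg _) zero_le_one (by linarith)]; congr 1; ring
    rw [h1, h2]
    refine mul_le_mul_of_nonneg_left ?_ (sq_nonneg _)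
    exact Real.rpow_le_rpow (sq_nonneg _) (hu.le_tsum x fun y _ => sq_nonneg _) (by linarith)
  have hs : Summable fun x => |u x| ^ q :=
    Summable.of_nonneg_of_le (fun x => by positivity) hpt (hu.mul_right _)
  refine ⟨hs, (hs.tsum_le_tsum hpt (hu.mul_right _)).trans (le_of_eq ?_)⟩
  rw [tsum_mul_right, ← hT]
  conv_lhs => rw [← Real.rpow_one T, ← Real.rpow_mul hT0, one_mul]
  rw [← Real.rpow_add_of_nonneg hT0 zero_le_one (by linarith)]; congr 1; ring

lemma rpow_rpow_abs (u p s : ℝ) : (|u| ^ p) ^ s = |u| ^ (p * s) :=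
  (Real.rpow_mul (abs_nonneg _) _ _).symm

lemma Pn_pow_bound {ι : Type*} {u : ι → ℝ} {p s : ℝ} (hs : 0 < s) (hq : 2 ≤ p * s)
    (hu : Summable fun x => u x ^ 2) :
    (Summable fun x => (|u x| ^ p) ^ s) ∧
      Pn s (fun x => |u x| ^ p) ≤ (∑' x, u x ^ 2) ^ (p / 2) := by
  obtain ⟨h1, h2⟩ := lq_bound hq hu
  simp only [Pn, rpow_rpow_abs]
  refine ⟨h1, ?_⟩
  have hT0 : 0 ≤ ∑' x, u x ^ 2 := tsum_nonneg fun x => sq_nonneg _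
  refine (Real.rpow_le_rpow (tsum_nonneg fun x => by positivity) h2 (by positivity)).trans
    (le_of_eq ?_)
  rw [← Real.rpow_mul hT0]
  congr 1
  field_simp

lemma abs_pw {p : ℝ} (hp : 1 < p) (u v : ℝ) : |(|u| ^ (p - 2) * u * v)| = |u| ^ (p - 1) * |v| := by
  rw [abs_mul, abs_mul, abs_of_nonneg (Real.rpow_nonneg (abs_nonneg u) _)]
  congr 1
  by_cases h : u = 0
  · rw [h]; simp [Real.zero_rpow (show p - 1 ≠ 0 by linarith)]
  · have h0 : 0 < |u| := abs_pos.2 h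
    conv_lhs => rw [← Real.rpow_one |u|, ← Real.rpow_mul h0.le, one_mul]
    rw [← Real.rpow_add h0]; congr 1; ring

lemma pw_split {p : ℝ} (hp : 1 < p) {b : ℝ} (hb : 0 ≤ b) : b ^ (p - 1) * b = b ^ p := by
  conv_lhs => rw [← Real.rpow_one b, ← Real.rpow_mul hb, one_mul]
  rw [← Real.rpow_add_of_nonneg hb (by linarith) zero_le_one]; congr 1; ring

lemma pw_le_add {p : ℝ} (hp : 1 < p) {b c : ℝ} (hb : 0 ≤ b) (hc : 0 ≤ c) :
    b ^ (p - 1) * c ≤ b ^ p + c ^ p := by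
  rcases le_total b c with h | h
  · have : b ^ (p - 1) * c ≤ c ^ (p - 1) * c :=
      mul_le_mul_of_nonneg_right (Real.rpow_le_rpow hb h (by linarith)) hc
    rw [pw_split hp hc] at this
    have := Real.rpow_nonneg hb p
    linarith
  · have : b ^ (p - 1) * c ≤ b ^ (p - 1) * b :=
      mul_le_mul_of_nonneg_left h (Real.rpow_nonneg hb _)
    rw [pw_split hp hb] at this
    have := Real.rpow_nonneg hc p
    linarith

lemma add_pw_le {r : ℝ} (hr : 0 ≤ r) {b c : ℝ} (hb : 0 ≤ b) (hc : 0 ≤ c) :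
    (b + c) ^ r ≤ 2 ^ r * (b ^ r + c ^ r) := by
  have hb' := Real.rpow_nonneg hb r
  have hc' := Real.rpow_nonneg hc r
  have h2 : (0 : ℝ) < 2 ^ r := by positivity
  rcases le_total b c with h | h
  · calc (b + c) ^ r ≤ (2 * c) ^ r := Real.rpow_le_rpow (by positivity) (by linarith) hr
      _ = 2 ^ r * c ^ r := Real.mul_rpow (by norm_num) hc
      _ ≤ _ := by nlinarith
  · calc (b + c) ^ r ≤ (2 * b) ^ r := Real.rpow_le_rpow (by positivity) (by linarith) hr
      _ = 2 ^ r * b ^ r := Real.mul_rpow (by norm_num) hb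
      _ ≤ _ := by nlinarith

section Kpart

variable [DecidableEq G] {R : G → G → ℝ} {s t A p : ℝ}

lemma Kterm_abs (hk : KBound (kap R) s t A) (hA : 0 ≤ A) (hp : 1 < p) (hq : 2 ≤ p * s)
    {u v : G → ℝ} (hu : Summable fun x => u x ^ 2) (hv : Summable fun x => v x ^ 2) :
    (Summable fun x => pot (kap R) (fun y => |u y| ^ p) x * (|u x| ^ (p - 1) * |v x|)) ∧
    (Summable fun x => conv R (fun y => |u y| ^ p) x * (|u x| ^ (p - 2) * u x * v x)) ∧
    |Kterm R p u v| ≤ ∑' x, pot (kap R) (fun y => |u y| ^ p) x * (|u x| ^ (p - 1) * |v x|) ∧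
    ∑' x, pot (kap R) (fun y => |u y| ^ p) x * (|u x| ^ (p - 1) * |v x|) ≤
      CY t A * (∑' x, u x ^ 2) ^ (p / 2) * ((∑' x, u x ^ 2) ^ (p / 2) + (∑' x, v x ^ 2) ^ (p / 2)) := by
  have hs0 := hk.conj.pos
  have hC := CY_nonneg hk.two_lt hA
  obtain ⟨u1, u2⟩ := Pn_pow_bound hs0 hq hu
  obtain ⟨v1, v2⟩ := Pn_pow_bound hs0 hq hv
  have hf : ∀ y, 0 ≤ |u y| ^ p := fun y => Real.rpow_nonneg (abs_nonneg _) _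
  have hg : ∀ y, 0 ≤ |v y| ^ p := fun y => Real.rpow_nonneg (abs_nonneg _) _
  have hpn := pot_nonneg hk hf
  obtain ⟨a1, a2⟩ := pot_pair hk hA hf u1 hf u1
  obtain ⟨b1, b2⟩ := pot_pair hk hA hf u1 hg v1
  have hle : ∀ x, pot (kap R) (fun y => |u y| ^ p) x * (|u x| ^ (p - 1) * |v x|) ≤
      pot (kap R) (fun y => |u y| ^ p) x * |u x| ^ p + pot (kap R) (fun y => |u y| ^ p) x * |v x| ^ p := by
    intro x
    rw [← mul_add]
    exact mul_le_mul_of_nonneg_left (pw_le_add hp (abs_nonneg _) (abs_nonneg _)) (hpn x)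
  have hS : Summable fun x => pot (kap R) (fun y => |u y| ^ p) x * (|u x| ^ (p - 1) * |v x|) :=
    Summable.of_nonneg_of_le (fun x => mul_nonneg (hpn x) (by positivity)) hle (a1.add b1)
  have habs : ∀ x, ‖conv R (fun y => |u y| ^ p) x * (|u x| ^ (p - 2) * u x * v x)‖ =
      pot (kap R) (fun y => |u y| ^ p) x * (|u x| ^ (p - 1) * |v x|) := by
    intro x
    rw [Real.norm_eq_abs, abs_mul, abs_pw hp, conv_eq_pot, abs_of_nonneg (hpn x)]
  have hSn : Summable fun x => ‖conv R (fun y => |u y| ^ p) x * (|u x| ^ (p - 2) * u x * v x)‖ := by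
    simp_rw [habs]; exact hS
  refine ⟨hS, hSn.of_norm, ?_, ?_⟩
  · have := norm_tsum_le_tsum_norm hSn
    simp_rw [habs] at this
    exact this
  · refine (hS.tsum_le_tsum hle (a1.add b1)).trans ?_
    rw [a1.tsum_add b1]
    have hT0 : 0 ≤ ∑' x, u x ^ 2 := tsum_nonneg fun x => sq_nonneg _
    have hP0 := Pn_nonneg s hf
    have hP1 := Pn_nonneg s hg
    have hT' := Real.rpow_nonneg hT0 (p / 2)
    rw [mul_add]
    refine add_le_add (a2.trans ?_) (b2.trans ?_) <;> gcongr

lemma K_main (hk : KBound (kap R) s t A) (hA : 0 ≤ A) (hp : 1 < p) (hq : 2 ≤ p * s) {L : ℝ}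
    {V : ℕ → G → ℝ} {u : G → ℝ} (hV : ∀ n, Summable fun x => V n x ^ 2)
    (hu : Summable fun x => u x ^ 2) (hw : ∀ n, Summable fun x => (V n x - u x) ^ 2)
    (hVL : ∀ n, ∑' x, V n x ^ 2 ≤ L) (hwL : ∀ n, ∑' x, (V n x - u x) ^ 2 ≤ L)
    (hlim : ∀ x, Tendsto (fun n => V n x) atTop (nhds (u x))) :
    ∃ e : ℕ → ℝ, Tendsto e atTop (nhds 0) ∧ ∀ n, |Kterm R p (V n) (V n - u)| ≤
      e n + 2 ^ p * 2 ^ p * CY t A * (∑' x, (V n x - u x) ^ 2) ^ p := by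
  have hs0 := hk.conj.pos
  have hC := CY_nonneg hk.two_lt hA
  have hp0 : 0 < p := by linarith
  have hL0 : 0 ≤ L := le_trans (tsum_nonneg fun x => sq_nonneg _) (hVL 0)
  set w : ℕ → G → ℝ := fun n x => V n x - u x with hwd
  have hwlim : ∀ x, Tendsto (fun n => |w n x|) atTop (nhds 0) := by
    intro x
    have := ((hlim x).sub_const (u x)).abs
    simpa using this
  have hPu := Pn_pow_bound hs0 hq hu
  have hPV := fun n => Pn_pow_bound hs0 hq (hV n)
  have hPw := fun n => Pn_pow_bound hs0 hq (hw n)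
  have nn : ∀ (f : G → ℝ) y, 0 ≤ |f y| ^ p := fun f y => Real.rpow_nonneg (abs_nonneg _) _
  -- first error term
  set e1 : ℕ → ℝ := fun n => CY t A * L ^ (p / 2) *
    Pn s (fun x => |u x| ^ (p - 1) * |w n x|) with he1
  have hconjp : p.HolderConjugate (p / (p - 1)) := Real.HolderConjugate.conjExponent hp
  have hlw : ∀ n, (Summable fun x => |w n x| ^ (p * s)) ∧
    ∑' x, |w n x| ^ (p * s) ≤ (∑' x, w n x ^ 2) ^ (p * s / 2) := fun n => lq_bound hq (hw n)
  have ee1 : ∀ x n, (|u x| ^ (p - 1) * |w n x|) ^ s = |u x| ^ ((p - 1) * s) * |w n x| ^ s := by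
    intro x n
    rw [Real.mul_rpow (by positivity) (abs_nonneg _), ← Real.rpow_mul (abs_nonneg _)]
  have eeu : ∀ x, (|u x| ^ ((p - 1) * s)) ^ (p / (p - 1)) = |u x| ^ (p * s) := by
    intro x
    rw [← Real.rpow_mul (abs_nonneg _)]
    congr 1
    have : p - 1 ≠ 0 := by linarith
    field_simp
  have eew : ∀ n x, (|w n x| ^ s) ^ p = |w n x| ^ (p * s) := by
    intro n x
    rw [← Real.rpow_mul (abs_nonneg _), mul_comm]
  have hsu : Summable fun x => (|u x| ^ ((p - 1) * s)) ^ (p / (p - 1)) := by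
    simp_rw [eeu]; exact (lq_bound hq hu).1
  have hsw : ∀ n, Summable fun x => (|w n x| ^ s) ^ p := fun n => by
    simp_rw [eew]; exact (hlw n).1
  have hT1s : ∀ n, Summable fun x => (|u x| ^ (p - 1) * |w n x|) ^ s := by
    intro n
    simp_rw [ee1]
    exact (Real.summable_and_inner_le_Lp_mul_Lq_tsum_of_nonneg hconjp.symm
      (fun x => by positivity) (fun x => by positivity) hsu (hsw n)).1
  have hE1 : Tendsto e1 atTop (nhds 0) := by
    have h1 := weak_tendsto hconjp (fun x => |u x| ^ ((p - 1) * s)) (fun x => by positivity)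
      hsu (fun n x => |w n x| ^ s) (fun n x => by positivity) hsw
      (L ^ (p * s / 2)) (fun n => by
        simp_rw [eew]
        exact (hlw n).2.trans (Real.rpow_le_rpow (tsum_nonneg fun x => sq_nonneg _) (hwL n)
          (by positivity)))
      (fun x => by
        have := (hwlim x).rpow_const (p := s) (Or.inr hs0.le)
        rwa [Real.zero_rpow hs0.ne'] at this)
    have h2 := (h1.rpow_const (p := 1 / s) (Or.inr (by positivity))).const_mul
      (CY t A * L ^ (p / 2))
    rw [Real.zero_rpow (by positivity), mul_zero] at h2
    simp only [he1, Pn, ee1]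
    exact h2
  -- second error term
  set e2 : ℕ → ℝ := fun n => ∑' x, pot (kap R) (fun y => |u y| ^ p) x * |w n x| ^ p with he2
  have hE2 : Tendsto e2 atTop (nhds 0) := by
    refine weak_tendsto hk.conj (pot (kap R) (fun y => |u y| ^ p)) (pot_nonneg hk (nn u))
      (pot_mem hk hA (nn u) hPu.1) (fun n x => |w n x| ^ p) (fun n => nn (w n))
      (fun n => (hPw n).1) (L ^ (p * s / 2)) (fun n => ?_) (fun x => ?_)
    · simp_rw [rpow_rpow_abs]
      exact (hlw n).2.trans (Real.rpow_le_rpow (tsum_nonneg fun x => sq_nonneg _) (hwL n)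
          (by positivity))
    · have := (hwlim x).rpow_const (p := p) (Or.inr hp0.le)
      rwa [Real.zero_rpow hp0.ne'] at this
  refine ⟨fun n => 2 ^ p * e1 n + 2 ^ p * 2 ^ p * e2 n, ?_, fun n => ?_⟩
  · simpa using (hE1.const_mul (2 ^ p)).add (hE2.const_mul (2 ^ p * 2 ^ p))
  obtain ⟨k1, -, k3, -⟩ := Kterm_abs hk hA hp hq (hV n) (v := w n) (hw n)
  refine le_trans k3 ?_
  have hVle : ∀ x, |V n x| ≤ |u x| + |w n x| := fun x => by
    have : V n x = u x + w n x := by simp [hwd]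
    rw [this]; exact abs_add_le _ _
  -- pairings
  obtain ⟨p1, q1⟩ := pot_pair hk hA (nn (V n)) (hPV n).1
    (g := fun x => |u x| ^ (p - 1) * |w n x|) (fun x => by positivity) (hT1s n)
  obtain ⟨p2, q2⟩ := pot_pair hk hA (nn (V n)) (hPV n).1 (nn (w n)) (hPw n).1
  obtain ⟨p3, q3⟩ := pot_pair hk hA (nn u) hPu.1 (nn (w n)) (hPw n).1
  obtain ⟨p4, q4⟩ := pot_pair hk hA (nn (w n)) (hPw n).1 (nn (w n)) (hPw n).1
  have hpot : ∀ x, pot (kap R) (fun y => |V n y| ^ p) x ≤ 2 ^ p * (pot (kap R) (fun y => |u y| ^ p) x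
      + pot (kap R) (fun y => |w n y| ^ p) x) := by
    intro x
    have su := pot_summable hk (nn u) hPu.1 x
    have sw := pot_summable hk (nn (w n)) (hPw n).1 x
    have sV := pot_summable hk (nn (V n)) (hPV n).1 x
    unfold pot
    rw [← su.tsum_add sw, ← tsum_mul_left]
    refine sV.tsum_le_tsum (fun y => ?_) ((su.add sw).mul_left _)
    have h1 : |V n y| ^ p ≤ 2 ^ p * (|u y| ^ p + |w n y| ^ p) :=
      (Real.rpow_le_rpow (abs_nonneg _) (hVle y) hp0.le).trans
        (add_pw_le hp0.le (abs_nonneg _) (abs_nonneg _))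
    have := mul_le_mul_of_nonneg_left h1 (hk.nonneg x y)
    linarith
  have hpt : ∀ x, |V n x| ^ (p - 1) * |w n x| ≤
      2 ^ p * (|u x| ^ (p - 1) * |w n x| + |w n x| ^ p) := by
    intro x
    have h1 : |V n x| ^ (p - 1) ≤ 2 ^ (p - 1) * (|u x| ^ (p - 1) + |w n x| ^ (p - 1)) :=
      (Real.rpow_le_rpow (abs_nonneg _) (hVle x) (by linarith)).trans
        (add_pw_le (by linarith) (abs_nonneg _) (abs_nonneg _))
    have h2 : (2 : ℝ) ^ (p - 1) ≤ 2 ^ p :=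
      Real.rpow_le_rpow_of_exponent_le (by norm_num) (by linarith)
    have h3 : |V n x| ^ (p - 1) ≤ 2 ^ p * (|u x| ^ (p - 1) + |w n x| ^ (p - 1)) :=
      h1.trans (mul_le_mul_of_nonneg_right h2 (by positivity))
    have h4 := mul_le_mul_of_nonneg_right h3 (abs_nonneg (w n x))
    rw [mul_assoc, add_mul, pw_split hp (abs_nonneg (w n x))] at h4
    exact h4
  have s1 : ∑' x, pot (kap R) (fun y => |V n y| ^ p) x * (|V n x| ^ (p - 1) * |w n x|) ≤
      2 ^ p * (∑' x, pot (kap R) (fun y => |V n y| ^ p) x * (|u x| ^ (p - 1) * |w n x|) +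
        ∑' x, pot (kap R) (fun y => |V n y| ^ p) x * |w n x| ^ p) := by
    rw [← p1.tsum_add p2, ← tsum_mul_left]
    refine k1.tsum_le_tsum (fun x => ?_) ((p1.add p2).mul_left _)
    have := mul_le_mul_of_nonneg_left (hpt x) (pot_nonneg hk (nn (V n)) x)
    linarith
  have s2 : ∑' x, pot (kap R) (fun y => |V n y| ^ p) x * |w n x| ^ p ≤
      2 ^ p * (e2 n + ∑' x, pot (kap R) (fun y => |w n y| ^ p) x * |w n x| ^ p) := by
    rw [he2, ← p3.tsum_add p4, ← tsum_mul_left]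
    refine p2.tsum_le_tsum (fun x => ?_) ((p3.add p4).mul_left _)
    have := mul_le_mul_of_nonneg_right (hpot x) (nn (w n) x)
    linarith
  have hTV0 : 0 ≤ ∑' x, V n x ^ 2 := tsum_nonneg fun x => sq_nonneg _
  have hTw0 : 0 ≤ ∑' x, w n x ^ 2 := tsum_nonneg fun x => sq_nonneg _
  have s3 : ∑' x, pot (kap R) (fun y => |V n y| ^ p) x * (|u x| ^ (p - 1) * |w n x|) ≤ e1 n := by
    refine q1.trans ?_
    have h1 : Pn s (fun x => |V n x| ^ p) ≤ L ^ (p / 2) :=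
      (hPV n).2.trans (Real.rpow_le_rpow hTV0 (hVL n) (by positivity))
    have h2 : 0 ≤ Pn s (fun x => |u x| ^ (p - 1) * |w n x|) :=
      Pn_nonneg s (fun x => by positivity)
    simp only [he1]
    gcongr
  have s4 : ∑' x, pot (kap R) (fun y => |w n y| ^ p) x * |w n x| ^ p ≤
      CY t A * (∑' x, w n x ^ 2) ^ p := by
    refine q4.trans ?_
    have h0 := Pn_nonneg s (nn (w n))
    have h1 : (∑' x, w n x ^ 2) ^ p = (∑' x, w n x ^ 2) ^ (p / 2) * (∑' x, w n x ^ 2) ^ (p / 2) := by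
      rw [← Real.rpow_add_of_nonneg hTw0 (by positivity) (by positivity)]; congr 1; ring
    rw [h1, mul_assoc]
    have := (hPw n).2
    gcongr
  have h2p : (0 : ℝ) < 2 ^ p := by positivity
  calc _ ≤ _ := s1
    _ ≤ 2 ^ p * (e1 n + 2 ^ p * (e2 n + CY t A * (∑' x, w n x ^ 2) ^ p)) := by
        gcongr
        exact s2.trans (by gcongr)
    _ = _ := by ring

end Kpart

section Epart

variable [Group G]

/-- Pointwise bilinear form. -/
def Qd (S : Finset G) (a : G → ℝ) (lam : ℝ) (u v : G → ℝ) (x : G) : ℝ :=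
  lap S u x * lap S v x + grad S u v x + (1 + lam * a x) * (u x * v x)

lemma eDensity_eq (S : Finset G) (a : G → ℝ) (lam : ℝ) (u : G → ℝ) (x : G) :
    eDensity S a lam u x = Qd S a lam u u x := by
  unfold eDensity Qd; ring

lemma lap_lin (S : Finset G) (u v : G → ℝ) (c : ℝ) (x : G) :
    lap S (u + c • v) x = lap S u x + c * lap S v x := by
  unfold lap
  rw [Finset.mul_sum, ← Finset.sum_add_distrib]
  refine Finset.sum_congr rfl fun s _ => ?_
  simp only [Pi.add_apply, Pi.smul_apply, smul_eq_mul]; ring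

lemma grad_lin (S : Finset G) (u v w : G → ℝ) (c : ℝ) (x : G) :
    grad S (u + c • v) w x = grad S u w x + c * grad S v w x := by
  unfold grad
  rw [mul_left_comm c, ← mul_add, Finset.mul_sum S _ c, ← Finset.sum_add_distrib]
  congr 1
  refine Finset.sum_congr rfl fun s _ => ?_
  simp only [Pi.add_apply, Pi.smul_apply, smul_eq_mul]; ring

lemma grad_comm (S : Finset G) (u v : G → ℝ) (x : G) : grad S u v x = grad S v u x := by
  unfold grad
  congr 1
  exact Finset.sum_congr rfl fun s _ => mul_comm _ _

lemma Qd_comm (S : Finset G) (a : G → ℝ) (lam : ℝ) (u v : G → ℝ) (x : G) :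
    Qd S a lam u v x = Qd S a lam v u x := by
  unfold Qd; rw [grad_comm]; ring

lemma Qd_lin (S : Finset G) (a : G → ℝ) (lam : ℝ) (u v w : G → ℝ) (c : ℝ) (x : G) :
    Qd S a lam (u + c • v) w x = Qd S a lam u w x + c * Qd S a lam v w x := by
  unfold Qd; rw [lap_lin, grad_lin]
  simp only [Pi.add_apply, Pi.smul_apply, smul_eq_mul]; ring

lemma Qd_expand (S : Finset G) (a : G → ℝ) (lam : ℝ) (u v : G → ℝ) (c : ℝ) (x : G) :
    Qd S a lam (u + c • v) (u + c • v) x =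
      Qd S a lam u u x + 2 * c * Qd S a lam u v x + c ^ 2 * Qd S a lam v v x := by
  rw [Qd_lin, Qd_comm S a lam u, Qd_comm S a lam v, Qd_lin, Qd_lin, Qd_comm S a lam v u]; ring

lemma grad_nonneg (S : Finset G) (u : G → ℝ) (x : G) : 0 ≤ grad S u u x :=
  mul_nonneg (by norm_num) (Finset.sum_nonneg fun s _ => mul_self_nonneg _)

variable {S : Finset G} {a : G → ℝ} {lam : ℝ}

lemma sq_le_Qd (u : G → ℝ) (x : G) :
    (1 + lam * a x) * u x ^ 2 ≤ Qd S a lam u u x := by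
  unfold Qd
  nlinarith [grad_nonneg S u x, mul_self_nonneg (lap S u x)]

lemma sq_le_Qd' (ha : ∀ x, 0 ≤ a x) (hl : 0 ≤ lam) (u : G → ℝ) (x : G) :
    u x ^ 2 ≤ Qd S a lam u u x := by
  refine le_trans ?_ (sq_le_Qd u x)
  nlinarith [mul_nonneg (mul_nonneg hl (ha x)) (sq_nonneg (u x))]

lemma Qd_nonneg (ha : ∀ x, 0 ≤ a x) (hl : 0 ≤ lam) (u : G → ℝ) (x : G) :
    0 ≤ Qd S a lam u u x := le_trans (sq_nonneg _) (sq_le_Qd' ha hl u x)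

lemma Qd_cs (ha : ∀ x, 0 ≤ a x) (hl : 0 ≤ lam) (u v : G → ℝ) (x : G) :
    |Qd S a lam u v x| ≤ Real.sqrt (Qd S a lam u u x) * Real.sqrt (Qd S a lam v v x) := by
  have h := discrim_le_zero (a := Qd S a lam v v x) (b := 2 * Qd S a lam u v x)
    (c := Qd S a lam u u x) (fun c => by
      have := Qd_nonneg (S := S) ha hl (u + c • v) x
      rw [Qd_expand] at this
      linarith)
  unfold discrim at h
  rw [← Real.sqrt_mul (Qd_nonneg ha hl u x)]
  apply Real.abs_le_sqrt
  nlinarith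

lemma Qd_am (ha : ∀ x, 0 ≤ a x) (hl : 0 ≤ lam) (u v : G → ℝ) (x : G) :
    |Qd S a lam u v x| ≤ Qd S a lam u u x + Qd S a lam v v x := by
  refine (Qd_cs ha hl u v x).trans ?_
  have h1 := Real.sq_sqrt (Qd_nonneg (S := S) ha hl u x)
  have h2 := Real.sq_sqrt (Qd_nonneg (S := S) ha hl v x)
  nlinarith [sq_nonneg (Real.sqrt (Qd S a lam u u x) - Real.sqrt (Qd S a lam v v x)),
    Qd_nonneg (S := S) ha hl u x, Qd_nonneg (S := S) ha hl v x]

lemma memE_iff (u : G → ℝ) : MemE S a lam u ↔ Summable (Qd S a lam u u) := by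
  unfold MemE
  rw [show eDensity S a lam u = Qd S a lam u u from funext (eDensity_eq S a lam u)]

lemma normEsq_eq (u : G → ℝ) : normEsq S a lam u = ∑' x, Qd S a lam u u x :=
  tsum_congr (eDensity_eq S a lam u)

lemma innerE_eq (u v : G → ℝ) : innerE S a lam u v = ∑' x, Qd S a lam u v x := rfl

lemma Qd_summable (ha : ∀ x, 0 ≤ a x) (hl : 0 ≤ lam) {u v : G → ℝ} (hu : MemE S a lam u)
    (hv : MemE S a lam v) : Summable (Qd S a lam u v) :=
  Summable.of_norm_bounded (((memE_iff u).1 hu).add ((memE_iff v).1 hv)) (Qd_am ha hl u v)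

lemma innerE_abs (ha : ∀ x, 0 ≤ a x) (hl : 0 ≤ lam) {u v : G → ℝ} (hu : MemE S a lam u)
    (hv : MemE S a lam v) : |innerE S a lam u v| ≤ normEsq S a lam u + normEsq S a lam v := by
  rw [innerE_eq, normEsq_eq, normEsq_eq, ← ((memE_iff u).1 hu).tsum_add ((memE_iff v).1 hv)]
  exact tsum_of_norm_bounded (f := Qd S a lam u v) (((memE_iff u).1 hu).add ((memE_iff v).1 hv)).hasSum (Qd_am ha hl u v)

lemma memE_lin (ha : ∀ x, 0 ≤ a x) (hl : 0 ≤ lam) {u v : G → ℝ} (hu : MemE S a lam u)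
    (hv : MemE S a lam v) (c : ℝ) : MemE S a lam (u + c • v) := by
  rw [memE_iff]
  have h := (((memE_iff u).1 hu).add ((Qd_summable ha hl hu hv).mul_left (2 * c))).add
    (((memE_iff v).1 hv).mul_left (c ^ 2))
  exact h.congr fun x => (Qd_expand S a lam u v c x).symm

lemma sub_eq_lin (u v : G → ℝ) : u - v = u + (-1 : ℝ) • v := by
  rw [neg_one_smul, sub_eq_add_neg]

lemma memE_sub (ha : ∀ x, 0 ≤ a x) (hl : 0 ≤ lam) {u v : G → ℝ} (hu : MemE S a lam u)
    (hv : MemE S a lam v) : MemE S a lam (u - v) := by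
  rw [sub_eq_lin]; exact memE_lin ha hl hu hv _

lemma normEsq_sub_le (ha : ∀ x, 0 ≤ a x) (hl : 0 ≤ lam) {u v : G → ℝ} (hu : MemE S a lam u)
    (hv : MemE S a lam v) :
    normEsq S a lam (u - v) ≤ 3 * normEsq S a lam u + 3 * normEsq S a lam v := by
  rw [normEsq_eq, normEsq_eq, normEsq_eq, ← tsum_mul_left, ← tsum_mul_left,
    ← (((memE_iff u).1 hu).mul_left 3).tsum_add (((memE_iff v).1 hv).mul_left 3)]
  refine ((memE_iff _).1 (memE_sub ha hl hu hv)).tsum_le_tsum (fun x => ?_)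
    ((((memE_iff u).1 hu).mul_left 3).add (((memE_iff v).1 hv).mul_left 3))
  rw [sub_eq_lin, Qd_expand]
  have := abs_le.1 (Qd_am (S := S) ha hl u v x)
  linarith [this.1]

lemma l2_of_memE (ha : ∀ x, 0 ≤ a x) (hl : 0 ≤ lam) {u : G → ℝ} (hu : MemE S a lam u) :
    (Summable fun x => u x ^ 2) ∧ ∑' x, u x ^ 2 ≤ normEsq S a lam u := by
  have h1 := (memE_iff u).1 hu
  have h2 : Summable fun x => u x ^ 2 :=
    Summable.of_nonneg_of_le (fun x => sq_nonneg _) (sq_le_Qd' ha hl u) h1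
  rw [normEsq_eq]
  exact ⟨h2, h2.tsum_le_tsum (sq_le_Qd' ha hl u) h1⟩

lemma normEsq_nonneg (ha : ∀ x, 0 ≤ a x) (hl : 0 ≤ lam) (u : G → ℝ) : 0 ≤ normEsq S a lam u := by
  rw [normEsq_eq]; exact tsum_nonneg (Qd_nonneg ha hl u)

lemma lap_tendsto {V : ℕ → G → ℝ} {u : G → ℝ}
    (hlim : ∀ x, Tendsto (fun n => V n x) atTop (nhds (u x))) (x : G) :
    Tendsto (fun n => lap S (V n) x) atTop (nhds (lap S u x)) :=
  tendsto_finsetSum _ fun s _ => (hlim (x * s)).sub (hlim x)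

lemma Qd_tendsto {V : ℕ → G → ℝ} {u : G → ℝ}
    (hlim : ∀ x, Tendsto (fun n => V n x) atTop (nhds (u x))) (x : G) :
    Tendsto (fun n => Qd S a lam (V n) (V n) x) atTop (nhds (Qd S a lam u u x)) := by
  unfold Qd grad
  refine (((lap_tendsto hlim x).mul (lap_tendsto hlim x)).add ((tendsto_finsetSum _ fun s _ =>
    ((hlim (x * s)).sub (hlim x)).mul ((hlim (x * s)).sub (hlim x))).const_mul _)).add
    (((hlim x).mul (hlim x)).const_mul _)

lemma fatou (ha : ∀ x, 0 ≤ a x) (hl : 0 ≤ lam) {V : ℕ → G → ℝ} {u : G → ℝ} {K : ℝ}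
    (hV : ∀ n, MemE S a lam (V n)) (hK : ∀ n, normEsq S a lam (V n) ≤ K)
    (hlim : ∀ x, Tendsto (fun n => V n x) atTop (nhds (u x))) :
    MemE S a lam u ∧ normEsq S a lam u ≤ K := by
  have hb : ∀ F : Finset G, ∑ x ∈ F, Qd S a lam u u x ≤ K := by
    intro F
    refine le_of_tendsto (tendsto_finsetSum F fun x _ => Qd_tendsto (S := S) (a := a) (lam := lam) hlim x)
      (Eventually.of_forall fun n => ?_)
    refine le_trans (((memE_iff _).1 (hV n)).sum_le_tsum F fun x _ => Qd_nonneg ha hl _ x) ?_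
    rw [← normEsq_eq]; exact hK n
  rw [memE_iff, normEsq_eq]
  exact ⟨summable_of_sum_le (Qd_nonneg ha hl u) hb, Real.tsum_le_of_sum_le (Qd_nonneg ha hl u) hb⟩

lemma inner_tendsto (ha : ∀ x, 0 ≤ a x) (hl : 0 ≤ lam) {W : ℕ → G → ℝ} {u : G → ℝ} {K : ℝ}
    (hu : MemE S a lam u)
    (hW : ∀ n, MemE S a lam (W n)) (hK : ∀ n, normEsq S a lam (W n) ≤ K)
    (hlim : ∀ x, Tendsto (fun n => W n x) atTop (nhds 0)) :
    Tendsto (fun n => innerE S a lam u (W n)) atTop (nhds 0) := by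
  have hQ0 : ∀ x, Tendsto (fun n => Qd S a lam (W n) (W n) x) atTop (nhds 0) := by
    intro x
    have := Qd_tendsto (S := S) (a := a) (lam := lam) (V := W) (u := fun _ => 0) hlim x
    simpa [Qd, lap, grad] using this
  have hsq : ∀ (v : G → ℝ) x, Real.sqrt (Qd S a lam v v x) ^ (2 : ℝ) = Qd S a lam v v x := by
    intro v x
    rw [Real.rpow_two, Real.sq_sqrt (Qd_nonneg ha hl v x)]
  have h2 : (2 : ℝ).HolderConjugate 2 := Real.HolderConjugate.two_two
  have hsu : Summable fun x => Real.sqrt (Qd S a lam u u x) ^ (2 : ℝ) := by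
    simp_rw [hsq]; exact (memE_iff u).1 hu
  have hsW : ∀ n, Summable fun x => Real.sqrt (Qd S a lam (W n) (W n) x) ^ (2 : ℝ) := by
    intro n; simp_rw [hsq]; exact (memE_iff _).1 (hW n)
  have h := weak_tendsto h2 (fun x => Real.sqrt (Qd S a lam u u x)) (fun x => Real.sqrt_nonneg _)
    hsu (fun n x => Real.sqrt (Qd S a lam (W n) (W n) x)) (fun n x => Real.sqrt_nonneg _)
    hsW K (fun n => by simp_rw [hsq]; rw [← normEsq_eq]; exact hK n)
    (fun x => by simpa using (hQ0 x).sqrt)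
  refine squeeze_zero_norm (fun n => ?_) h
  exact tsum_of_norm_bounded (Real.summable_and_inner_le_Lp_mul_Lq_tsum_of_nonneg h2
    (fun x => Real.sqrt_nonneg _) (fun x => Real.sqrt_nonneg _) hsu (hsW n)).1.hasSum
    (Qd_cs ha hl u (W n))

end Epart

section Main

variable [Group G] {S : Finset G} {a : G → ℝ} {lam : ℝ}

lemma Qd_smul (S : Finset G) (a : G → ℝ) (lam : ℝ) (v w : G → ℝ) (c : ℝ) (x : G) :
    Qd S a lam (c • v) w x = c * Qd S a lam v w x := by
  have h := Qd_lin S a lam 0 v w c x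
  have h0 : Qd S a lam 0 w x = 0 := by simp [Qd, lap, grad]
  rwa [zero_add, h0, zero_add] at h

variable [DecidableEq G] {R : G → G → ℝ} {s t A p : ℝ}

lemma Jd_smul (u v : G → ℝ) (c : ℝ) : Jd S a lam R p u (c • v) = c * Jd S a lam R p u v := by
  unfold Jd
  rw [innerE_eq, innerE_eq, mul_sub, ← tsum_mul_left, Kterm, Kterm, ← tsum_mul_left]
  congr 1
  · refine tsum_congr fun x => ?_
    rw [Qd_comm, Qd_smul, Qd_comm]
  · refine tsum_congr fun x => ?_
    simp only [Pi.smul_apply, smul_eq_mul]; ring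

lemma Jd_le_dual (ha : ∀ x, 0 ≤ a x) (hl : 0 ≤ lam) (hk : KBound (kap R) s t A) (hA : 0 ≤ A)
    (hp : 1 < p) (hq : 2 ≤ p * s) {u v : G → ℝ} (hu : MemE S a lam u) (hv : MemE S a lam v) {L : ℝ}
    (hL : 0 < L) (hvL : normEsq S a lam v ≤ L) :
    |Jd S a lam R p u v| ≤ Real.sqrt L * dualNorm S a lam R p u := by
  have hC := CY_nonneg hk.two_lt hA
  obtain ⟨hu2, -⟩ := l2_of_memE ha hl hu
  have hbdd : BddAbove {r : ℝ | ∃ v, MemE S a lam v ∧ normEsq S a lam v ≤ 1 ∧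
      r = |Jd S a lam R p u v|} := by
    refine ⟨normEsq S a lam u + 1 +
      CY t A * (∑' x, u x ^ 2) ^ (p / 2) * ((∑' x, u x ^ 2) ^ (p / 2) + 1), ?_⟩
    rintro r ⟨w, hw, hw1, rfl⟩
    obtain ⟨hw2, hw3⟩ := l2_of_memE ha hl hw
    obtain ⟨-, -, k3, k4⟩ := Kterm_abs hk hA hp hq hu2 hw2
    have h1 := innerE_abs ha hl hu hw
    have h2 : (∑' x, w x ^ 2) ^ (p / 2) ≤ 1 :=
      Real.rpow_le_one (tsum_nonneg fun x => sq_nonneg _) (hw3.trans hw1) (by linarith)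
    have hT : 0 ≤ (∑' x, u x ^ 2) ^ (p / 2) :=
      Real.rpow_nonneg (tsum_nonneg fun x => sq_nonneg _) _
    have h3 : CY t A * (∑' x, u x ^ 2) ^ (p / 2) *
        ((∑' x, u x ^ 2) ^ (p / 2) + (∑' x, w x ^ 2) ^ (p / 2)) ≤
        CY t A * (∑' x, u x ^ 2) ^ (p / 2) * ((∑' x, u x ^ 2) ^ (p / 2) + 1) := by gcongr
    have h4 := abs_sub (innerE S a lam u w) (Kterm R p u w)
    unfold Jd
    linarith
  have hs : 0 < Real.sqrt L := Real.sqrt_pos.2 hL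
  have hmem : MemE S a lam ((Real.sqrt L)⁻¹ • v) := by
    rw [memE_iff]
    refine (((memE_iff v).1 hv).mul_left ((Real.sqrt L)⁻¹ * (Real.sqrt L)⁻¹)).congr fun x => ?_
    rw [Qd_smul, Qd_comm S a lam v (_ • v), Qd_smul, mul_assoc]
  have hnorm : normEsq S a lam ((Real.sqrt L)⁻¹ • v) ≤ 1 := by
    have : normEsq S a lam ((Real.sqrt L)⁻¹ • v) = L⁻¹ * normEsq S a lam v := by
      rw [normEsq_eq, normEsq_eq, ← tsum_mul_left]
      refine tsum_congr fun x => ?_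
      rw [Qd_smul, Qd_comm, Qd_smul, ← mul_assoc, ← mul_inv, Real.mul_self_sqrt hL.le]
    rw [this, inv_mul_le_iff₀ hL, mul_one]; exact hvL
  have h : |Jd S a lam R p u ((Real.sqrt L)⁻¹ • v)| ≤ dualNorm S a lam R p u :=
    le_csSup hbdd ⟨_, hmem, hnorm, rfl⟩
  rw [Jd_smul, abs_mul, abs_of_pos (inv_pos.2 hs), inv_mul_le_iff₀ hs] at h
  exact h

lemma Dterm_eq (hp : 1 < p) (u : G → ℝ) : Dterm R p u = Kterm R p u u := by
  unfold Dterm Kterm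
  refine tsum_congr fun x => ?_
  congr 1
  by_cases h : u x = 0
  · rw [h]; simp [Real.zero_rpow (show p ≠ 0 by linarith)]
  · have h0 : 0 < |u x| := abs_pos.2 h
    rw [mul_assoc, ← abs_mul_abs_self (u x), ← mul_assoc]
    rw [show p = (p - 2) + 1 + 1 by ring, Real.rpow_add_one h0.ne', Real.rpow_add_one h0.ne']
    congr 3; ring_nf

lemma ps_bounded (ha : ∀ x, 0 ≤ a x) (hl : 0 ≤ lam) (hk : KBound (kap R) s t A) (hA : 0 ≤ A)
    (hp : 1 < p) (hq : 2 ≤ p * s) {cs c : ℝ} (hc : c ≤ cs) {U : ℕ → G → ℝ}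
    (hU : PSseq S a lam R p c U) : ∀ᶠ n in atTop,
      normEsq S a lam (U n) ≤ 2 / (1 / 2 - 1 / (2 * p)) * (cs + 1) + 1 := by
  obtain ⟨hm, hJ, hD⟩ := hU
  set θ : ℝ := 1 / 2 - 1 / (2 * p) with hθ
  have hp0 : 0 < p := by linarith
  have hθ0 : 0 < θ := by
    rw [hθ, sub_pos]
    exact one_div_lt_one_div_of_lt (by norm_num) (by linarith)
  filter_upwards [hJ.eventually (gt_mem_nhds (show c < cs + 1 by linarith)),
    hD.eventually (gt_mem_nhds hθ0)] with n h1 h2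
  set E := normEsq S a lam (U n) with hE
  have hE0 : 0 ≤ E := normEsq_nonneg ha hl _
  have h3 := Jd_le_dual ha hl hk hA hp hq (hm n) (hm n) (L := E + 1) (by linarith) (by linarith)
  have hsq : Real.sqrt (E + 1) ≤ E + 1 := by
    rw [Real.sqrt_le_left (by linarith)]; nlinarith
  have h4 : |Jd S a lam R p (U n) (U n)| ≤ (E + 1) * θ := by
    refine h3.trans ?_
    calc _ ≤ Real.sqrt (E + 1) * θ := mul_le_mul_of_nonneg_left h2.le (Real.sqrt_nonneg _)
      _ ≤ _ := mul_le_mul_of_nonneg_right hsq hθ0.le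
  have h5 : Jd S a lam R p (U n) (U n) = E - Dterm R p (U n) := by
    rw [Dterm_eq hp, Jd, innerE_eq, hE, normEsq_eq]
  have h6 : Jfun S a lam R p (U n) = (1 / 2) * E - (1 / (2 * p)) * Dterm R p (U n) := rfl
  have h7 : θ * E = Jfun S a lam R p (U n) - (1 / (2 * p)) * Jd S a lam R p (U n) (U n) := by
    rw [h5, h6, hθ]; ring
  have h8 : -((1 / (2 * p)) * Jd S a lam R p (U n) (U n)) ≤ (1 / 2) * ((E + 1) * θ) := by
    have h9 := (abs_le.1 h4).1
    have h10 : 1 / (2 * p) ≤ 1 / 2 := by rw [hθ] at hθ0; linarith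
    have h11 : 0 ≤ 1 / (2 * p) := by positivity
    have h12 : 0 ≤ (E + 1) * θ := by positivity
    nlinarith
  have h13 : θ * E ≤ 2 * (cs + 1) + θ := by linarith
  have h14 : 2 / θ * (cs + 1) + 1 = (2 * (cs + 1) + θ) / θ := by field_simp
  rw [h14, le_div_iff₀ hθ0]; linarith

lemma l2_split (ha : ∀ x, 0 ≤ a x) (hl : 0 ≤ lam) {M : ℝ} (hM : 0 < M) {F : Finset G}
    (hF : ∀ x, a x ≤ M → x ∈ F) {w : G → ℝ} (hw : MemE S a lam w) :
    (1 + lam * M) * ∑' x, w x ^ 2 ≤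
      (1 + lam * M) * ∑ x ∈ F, w x ^ 2 + normEsq S a lam w := by
  obtain ⟨h2, -⟩ := l2_of_memE ha hl hw
  have hQ := (memE_iff w).1 hw
  have hlM : 0 ≤ lam * M := by positivity
  rw [normEsq_eq, ← h2.sum_add_tsum_compl (s := F), mul_add]
  have h1 : (1 + lam * M) * ∑' x : ((F : Set G)ᶜ : Set G), w x ^ 2 ≤
      ∑' x : ((F : Set G)ᶜ : Set G), Qd S a lam w w x := by
    rw [← tsum_mul_left]
    refine ((h2.subtype _).mul_left _).tsum_le_tsum (fun x => ?_) (hQ.subtype _)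
    refine le_trans ?_ (sq_le_Qd w x)
    have hx : M < a x := by
      by_contra hcon
      exact x.2 (hF x (not_lt.1 hcon))
    have : lam * M ≤ lam * a x := mul_le_mul_of_nonneg_left hx.le hl
    exact mul_le_mul_of_nonneg_right (by linarith) (sq_nonneg _)
  have h3 : ∑' x : ((F : Set G)ᶜ : Set G), Qd S a lam w w x ≤ ∑' x, Qd S a lam w w x :=
    hQ.tsum_subtype_le _ _ (Qd_nonneg ha hl w)
  linarith

end Main


theorem PS_condition_large_lambda
    {G : Type*} [Group G] [Countable G] [DecidableEq G]
    (S : Finset G) (hSsymm : ∀ s ∈ S, s⁻¹ ∈ S)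
    (hSgen : Subgroup.closure (S : Set G) = ⊤)
    (N : ℕ) (hN : 2 ≤ N) (hgrowth : PolyGrowth S N)
    (α : ℝ) (hα0 : 0 < α) (hαN : α < (N : ℝ))
    (R : G → G → ℝ) (hR : RieszKernel S N α R)
    (p : ℝ) (hp : ((N : ℝ) + α) / (N : ℝ) < p)
    (a : G → ℝ) (ha : ∀ x, 0 ≤ a x)
    (hA1 : CondA1 S a) (hA2 : CondA2 a) :
    ∀ cstar : ℝ, 0 < cstar → ∃ lamstar : ℝ, 0 < lamstar ∧
      ∀ lam : ℝ, lamstar ≤ lam → ∀ c : ℝ, c ≤ cstar → ∀ U : ℕ → G → ℝ,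
        PSseq S a lam R p c U →
        ∃ φ : ℕ → ℕ, StrictMono φ ∧ ∃ u : G → ℝ, MemE S a lam u ∧
          Tendsto (fun n => normEsq S a lam (U (φ n) - u)) atTop (nhds 0) := by
  classical
  intro cstar hcs
  have hN0 : (0 : ℝ) < N := by positivity
  have hp1 : 1 < p := lt_trans (by rw [lt_div_iff₀ hN0]; linarith) hp
  obtain ⟨s, t, hst, ht2, hNt, hq⟩ := exists_exp hN hα0 hαN hp
  obtain ⟨A, hA, hk⟩ := kap_bound hgrowth hR hst ht2 hNt
  obtain ⟨M, hM, hMfin, -⟩ := hA2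
  set K : ℝ := 2 / (1 / 2 - 1 / (2 * p)) * (cstar + 1) + 1 with hKd
  have hθ0 : 0 < 1 / 2 - 1 / (2 * p) := by
    rw [sub_pos]
    exact one_div_lt_one_div_of_lt (by norm_num) (by linarith)
  have hK0 : 0 < K := by positivity
  have hC := CY_nonneg ht2 hA
  set B : ℝ := 2 ^ p * 2 ^ p * CY t A * (6 * K) ^ (p - 1) with hB
  have hB0 : 0 ≤ B := by positivity
  refine ⟨(2 * B + 1) / M, by positivity, fun lam hlam c hc U hU => ?_⟩
  have hl : 0 ≤ lam := le_trans (by positivity) hlam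
  have hlM : 2 * B ≤ 1 + lam * M := by
    rw [div_le_iff₀ hM] at hlam; linarith
  obtain ⟨n0, hn0⟩ := eventually_atTop.1 (ps_bounded ha hl hk hA hp1 hq hc hU)
  obtain ⟨hmem, -, hdual⟩ := hU
  -- extraction of a pointwise convergent subsequence
  have hcpt : IsCompact (Set.pi Set.univ fun _ : G => Set.Icc (-Real.sqrt K) (Real.sqrt K)) :=
    isCompact_univ_pi fun _ => isCompact_Icc
  obtain ⟨u, -, ψ, hψ, hψlim⟩ := hcpt.tendsto_subseq (x := fun n => U (n + n0)) (by
    intro n x _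
    have hm := hmem (n + n0)
    have h1 := (sq_le_Qd' (S := S) ha hl (U (n + n0)) x).trans
      (((memE_iff _).1 hm).le_tsum x fun y _ => Qd_nonneg ha hl _ y)
    rw [← normEsq_eq] at h1
    exact abs_le.1 (Real.abs_le_sqrt (h1.trans (hn0 _ (Nat.le_add_left _ _)))))
  set φ : ℕ → ℕ := fun n => ψ n + n0 with hφ
  have hφm : StrictMono φ := fun i j hij => Nat.add_lt_add_right (hψ hij) n0
  set V : ℕ → G → ℝ := fun n => U (φ n) with hVd
  have hlim : ∀ x, Tendsto (fun n => V n x) atTop (nhds (u x)) := fun x =>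
    (tendsto_pi_nhds.1 hψlim) x
  have hV : ∀ n, MemE S a lam (V n) := fun n => hmem _
  have hVK : ∀ n, normEsq S a lam (V n) ≤ K := fun n => hn0 _ (Nat.le_add_left _ _)
  obtain ⟨hu, huK⟩ := fatou ha hl hV hVK hlim
  refine ⟨φ, hφm, u, hu, ?_⟩
  have hW : ∀ n, MemE S a lam (V n - u) := fun n => memE_sub ha hl (hV n) hu
  have hWK : ∀ n, normEsq S a lam (V n - u) ≤ 6 * K := fun n => by
    have := normEsq_sub_le ha hl (hV n) hu
    linarith [hVK n]
  have hWlim : ∀ x, Tendsto (fun n => (V n - u) x) atTop (nhds 0) := fun x => by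
    simpa using (hlim x).sub_const (u x)
  have hin := inner_tendsto ha hl hu hW hWK hWlim
  obtain ⟨e, he, hKe⟩ := K_main hk hA hp1 hq (L := 6 * K) (V := V) (u := u)
    (fun n => (l2_of_memE ha hl (hV n)).1) (l2_of_memE ha hl hu).1
    (fun n => (l2_of_memE ha hl (hW n)).1)
    (fun n => ((l2_of_memE ha hl (hV n)).2.trans (hVK n)).trans (by linarith))
    (fun n => (l2_of_memE ha hl (hW n)).2.trans (hWK n)) hlim
  have hdual' : Tendsto (fun n => Real.sqrt (6 * K) * dualNorm S a lam R p (V n)) atTop (nhds 0) := by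
    simpa using (hdual.comp hφm.tendsto_atTop).const_mul (Real.sqrt (6 * K))
  have hFlim : Tendsto (fun n => ∑ x ∈ hMfin.toFinset, (V n - u) x ^ 2) atTop (nhds 0) := by
    have := tendsto_finsetSum (f := fun x n => (V n - u) x ^ 2) (x := atTop) (a := fun _ => (0:ℝ))
      hMfin.toFinset (fun x _ => by simpa using (hWlim x).pow 2)
    simpa using this
  have htot : Tendsto (fun n => 2 * ((Real.sqrt (6 * K) * dualNorm S a lam R p (V n)) +
      |innerE S a lam u (V n - u)| + e n + B * ∑ x ∈ hMfin.toFinset, (V n - u) x ^ 2))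
      atTop (nhds 0) := by
    simpa using (((hdual'.add hin.abs).add he).add (hFlim.const_mul B)).const_mul 2
  refine squeeze_zero (fun n => normEsq_nonneg ha hl _) (fun n => ?_) htot
  have h1 := Jd_le_dual ha hl hk hA hp1 hq (hV n) (hW n) (by positivity) (hWK n)
  have h2 : normEsq S a lam (V n - u) =
      innerE S a lam (V n) (V n - u) - innerE S a lam u (V n - u) := by
    rw [innerE_eq, innerE_eq, ← (Qd_summable ha hl (hV n) (hW n)).tsum_sub
      (Qd_summable ha hl hu (hW n)), normEsq_eq]
    refine tsum_congr fun x => ?_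
    conv_lhs => rw [sub_eq_lin, Qd_lin, ← sub_eq_lin]
    ring
  have h3 : innerE S a lam (V n) (V n - u) =
      Jd S a lam R p (V n) (V n - u) + Kterm R p (V n) (V n - u) := by
    unfold Jd; ring
  have h4 := hKe n
  set E := normEsq S a lam (V n - u) with hE
  have hE0 : 0 ≤ E := normEsq_nonneg ha hl _
  set T := ∑' x, (V n x - u x) ^ 2 with hT
  have hT0 : 0 ≤ T := tsum_nonneg fun x => sq_nonneg _
  have hTL : T ≤ 6 * K := (l2_of_memE ha hl (hW n)).2.trans (hWK n)
  have h5 : 2 ^ p * 2 ^ p * CY t A * T ^ p ≤ B * T := by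
    rw [← pw_split hp1 hT0, hB, ← mul_assoc]
    have : T ^ (p - 1) ≤ (6 * K) ^ (p - 1) := Real.rpow_le_rpow hT0 hTL (by linarith)
    gcongr
  have h6 := l2_split ha hl hM (F := hMfin.toFinset) (fun x hx => by simpa using hx) (hW n)
  have h7 : (1 + lam * M) * T ≤ (1 + lam * M) * ∑ x ∈ hMfin.toFinset, (V n - u) x ^ 2 + E := h6
  set Q := ∑ x ∈ hMfin.toFinset, (V n - u) x ^ 2 with hQ
  have hpos : 0 < 1 + lam * M := by positivity
  have h8 : B * T ≤ B * Q + E / 2 := by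
    have h9 : T - Q ≤ E / (1 + lam * M) := by rw [le_div_iff₀ hpos]; linarith
    have h10 : B * (E / (1 + lam * M)) ≤ E / 2 := by
      rw [mul_div_assoc', div_le_div_iff₀ hpos (by norm_num)]
      nlinarith
    nlinarith [mul_le_mul_of_nonneg_left h9 hB0]
  have a1 := le_abs_self (Jd S a lam R p (V n) (V n - u))
  have a2 := le_abs_self (Kterm R p (V n) (V n - u))
  have a3 := neg_abs_le (innerE S a lam u (V n - u))
  linarith

end Choquard
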